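/- Let 0 < α < 1 and T > 0, and let (u, p) be a strong solution of the Navier–Stokes equations on [0,T) × ℝ³ (smooth, divergence-free, with u(t,·) and p(t,·) Schwartz in x, locally uniformly in t), with vorticity ω = curl u. There exists a constant C > 0 (independent of u) such that if K := ∫₀ᵀ (‖ω(τ,·)‖_{Ḃ^{−α}_{∞,∞}}^{2/(2−α)} + ‖ω(τ,·)‖_{Ḃ^{−1−α}_{∞,∞}}^{2/(1−α)}) dτ < ∞, then for every t ∈ [0,T): ‖ω(t,·)‖_{L²} ≤ ‖ω(0,·)‖_{L²} exp(C K), and consequently sup_{0≤t<T} (‖u(t,·)‖_{L²} + ‖∇u(t,·)‖_{L²}) ≤ ‖u(0,·)‖_{L²} + ‖ω(0,·)‖_{L²} exp(C K) < ∞. (This is the a priori H¹ bound underlying the blow-up criterion of Theorem 3.1: under the stated integral condition on the vorticity, the H¹ norm of the solution stays bounded up to time T, so the solution can be continued beyond T.) -/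

import Mathlib

open MeasureTheory Real Complex Filter Function
open scoped ENNReal FourierTransform SchwartzMap

noncomputable section

/-- The properties of the radial smooth cutoff `χ` used to build the
Littlewood–Paley decomposition: smooth, compactly supported, radial,
`0 ≤ χ ≤ 1`, `χ = 1` on `{‖ξ‖ ≤ 3/4}` and `χ = 0` on `{‖ξ‖ > 4/3}`. -/
def IsLPCutoff {n : ℕ} (χ : EuclideanSpace ℝ (Fin n) → ℝ) : Prop :=
  ContDiff ℝ ((⊤ : ℕ∞) : WithTop ℕ∞) χ ∧ HasCompactSupport χ ∧
    (∀ ξ η, ‖ξ‖ = ‖η‖ → χ ξ = χ η) ∧ (∀ ξ, 0 ≤ χ ξ) ∧ (∀ ξ, χ ξ ≤ 1) ∧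
    (∀ ξ, ‖ξ‖ ≤ 3 / 4 → χ ξ = 1) ∧ (∀ ξ, 4 / 3 < ‖ξ‖ → χ ξ = 0)

/-- The low-frequency Littlewood–Paley projection `S_j f = 𝓕⁻¹(χ(·/2^j) 𝓕 f)`. -/
def Sproj {n : ℕ} (χ : EuclideanSpace ℝ (Fin n) → ℝ) (j : ℤ)
    (f : EuclideanSpace ℝ (Fin n) → ℂ) : EuclideanSpace ℝ (Fin n) → ℂ :=
  𝓕⁻ fun ξ => ((χ ((2 : ℝ) ^ (-j) • ξ) : ℝ) : ℂ) * 𝓕 f ξ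

/-- The Littlewood–Paley block `Δ_j f = 𝓕⁻¹(φ̂(·/2^j) 𝓕 f)`, where
`φ̂(ξ) = χ(ξ/2) - χ(ξ)`, i.e. `φ̂(ξ/2^j) = χ(ξ/2^(j+1)) - χ(ξ/2^j)`. -/
def Dproj {n : ℕ} (χ : EuclideanSpace ℝ (Fin n) → ℝ) (j : ℤ)
    (f : EuclideanSpace ℝ (Fin n) → ℂ) : EuclideanSpace ℝ (Fin n) → ℂ :=
  𝓕⁻ fun ξ => ((χ ((2 : ℝ) ^ (-(j + 1)) • ξ) - χ ((2 : ℝ) ^ (-j) • ξ) : ℝ) : ℂ) * 𝓕 f ξ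

/-- The `ℓ^q(ℤ)` norm of a sequence of extended nonnegative reals, with the usual
supremum modification for `q = ∞`. -/
def lqNorm (q : ℝ≥0∞) (a : ℤ → ℝ≥0∞) : ℝ≥0∞ :=
  if q = ∞ then ⨆ j, a j else (∑' j, a j ^ q.toReal) ^ (1 / q.toReal)

/-- The homogeneous Besov norm `‖f‖_{Ḃ^s_{p,q}}`, valued in `[0,∞]`. -/
def besovNorm {n : ℕ} (χ : EuclideanSpace ℝ (Fin n) → ℝ) (s : ℝ) (p q : ℝ≥0∞)
    (f : EuclideanSpace ℝ (Fin n) → ℂ) : ℝ≥0∞ :=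
  lqNorm q fun j => (2 : ℝ≥0∞) ^ ((j : ℝ) * s) * eLpNorm (Dproj χ j f) p volume
noncomputable section

/-- Abbreviation for the Euclidean space `ℝ³`. -/
abbrev E3 := EuclideanSpace ℝ (Fin 3)

/-- The partial derivative `∂ᵢ f` in the `i`-th coordinate direction. -/
def pd (i : Fin 3) (f : E3 → ℝ) : E3 → ℝ :=
  fun x => fderiv ℝ f x (EuclideanSpace.single i 1)

/-- The curl `∇ × u = (∂₂u³ - ∂₃u², ∂₃u¹ - ∂₁u³, ∂₁u² - ∂₂u¹)` of a vector field on `ℝ³`. -/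
def curl3 (u : Fin 3 → E3 → ℝ) : Fin 3 → E3 → ℝ :=
  ![fun x => pd 1 (u 2) x - pd 2 (u 1) x,
    fun x => pd 2 (u 0) x - pd 0 (u 2) x,
    fun x => pd 0 (u 1) x - pd 1 (u 0) x]

/-- The curl of a Schwartz vector field on `ℝ³`. -/
def curlS (u : Fin 3 → 𝓢(E3, ℝ)) : Fin 3 → E3 → ℝ :=
  curl3 fun i => ⇑(u i)

/-- The `L²` norm of a vector field (the `ℓ²` combination of the componentwise norms),
valued in `[0,∞]`. -/
def vecL2 (v : Fin 3 → E3 → ℝ) : ℝ≥0∞ :=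
  (∑ i : Fin 3, eLpNorm (v i) 2 volume ^ (2 : ℝ)) ^ (1 / 2 : ℝ)

/-- The `L²` norm `‖∇v‖_{L²}` of the gradient of a vector field,
`‖∇v‖_{L²}² = Σ_{i,j} ‖∂ᵢ vʲ‖_{L²}²`, valued in `[0,∞]`. -/
def gradL2 (v : Fin 3 → E3 → ℝ) : ℝ≥0∞ :=
  (∑ i : Fin 3, ∑ j : Fin 3, eLpNorm (pd i (v j)) 2 volume ^ (2 : ℝ)) ^ (1 / 2 : ℝ)

/-- The homogeneous Besov norm `‖v‖_{Ḃ^s_{∞,∞}} = sup_j 2^{js} ‖Δ_j v‖_{L^∞}` of a real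
vector field on `ℝ³`, taken as the maximum (supremum) over the components. -/
def vecBesovInf (χ : E3 → ℝ) (s : ℝ) (v : Fin 3 → E3 → ℝ) : ℝ≥0∞ :=
  ⨆ i : Fin 3, ⨆ j : ℤ,
    (2 : ℝ≥0∞) ^ ((j : ℝ) * s) * eLpNorm (Dproj χ j fun x => ((v i x : ℝ) : ℂ)) ⊤ volume

/-- The homogeneous Besov norm `Ḃ^s_{2,2}` of a 3×3-matrix field, as the `ℓ²`
combination of the componentwise Besov norms. -/
def matBesov22 (χ : E3 → ℝ) (s : ℝ) (m : Fin 3 → Fin 3 → E3 → ℝ) : ℝ≥0∞ :=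
  (∑ i : Fin 3, ∑ j : Fin 3,
      besovNorm χ s 2 2 (fun x => ((m i j x : ℝ) : ℂ)) ^ (2 : ℝ)) ^ (1 / 2 : ℝ)

/-- The `L²` norm of `Λ^α v`, where `Λ^α f = 𝓕⁻¹(|ξ|^α 𝓕 f)` acts componentwise on the
real vector field `v`, taken as the `ℓ²` combination of the componentwise norms. -/
def vecFracLapL2 (α : ℝ) (v : Fin 3 → E3 → ℝ) : ℝ≥0∞ :=
  (∑ i : Fin 3,
      eLpNorm (𝓕⁻ fun ξ => ((‖ξ‖ ^ α : ℝ) : ℂ) * 𝓕 (fun x => ((v i x : ℝ) : ℂ)) ξ) 2 volume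
        ^ (2 : ℝ)) ^ (1 / 2 : ℝ)

/-- The vortex-stretching integral `∫ ((ω·∇)u)·ω dx` of a Schwartz vector field `u`
with vorticity `ω = curl u`. -/
def vortexStretch (u : Fin 3 → 𝓢(E3, ℝ)) : ℝ :=
  ∫ x, ∑ j : Fin 3, (∑ i : Fin 3, curlS u i x * pd i (⇑(u j)) x) * curlS u j x

/-- A **strong solution of the Navier–Stokes equations** on `[0,T) × ℝ³`: the velocity
`u` and the pressure `p` are smooth on `[0,T) × ℝ³` and Schwartz in the space variable
with all Schwartz seminorms locally bounded in time, `u(t,·)` is divergence-free, and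
`∂ₜu - Δu + (u·∇)u + ∇p = 0` on `(0,T) × ℝ³`. -/
structure IsStrongSolution (T : ℝ) (u : ℝ → Fin 3 → 𝓢(E3, ℝ)) (p : ℝ → 𝓢(E3, ℝ)) :
    Prop where
  smooth_u : ∀ i : Fin 3, ContDiffOn ℝ ((⊤ : ℕ∞) : WithTop ℕ∞)
    (fun tx : ℝ × E3 => u tx.1 i tx.2) (Set.Ico 0 T ×ˢ Set.univ)
  smooth_p : ContDiffOn ℝ ((⊤ : ℕ∞) : WithTop ℕ∞)
    (fun tx : ℝ × E3 => p tx.1 tx.2) (Set.Ico 0 T ×ˢ Set.univ)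
  locBdd_u : ∀ k l : ℕ, ∀ t ∈ Set.Ico (0 : ℝ) T, ∃ ε > 0, ∃ M : ℝ,
    ∀ s ∈ Set.Ico (0 : ℝ) T, |s - t| < ε → ∀ i, SchwartzMap.seminorm ℝ k l (u s i) ≤ M
  locBdd_p : ∀ k l : ℕ, ∀ t ∈ Set.Ico (0 : ℝ) T, ∃ ε > 0, ∃ M : ℝ,
    ∀ s ∈ Set.Ico (0 : ℝ) T, |s - t| < ε → SchwartzMap.seminorm ℝ k l (p s) ≤ M
  divFree : ∀ t ∈ Set.Ico (0 : ℝ) T, ∀ x, ∑ i : Fin 3, pd i (⇑(u t i)) x = 0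
  eqn : ∀ t ∈ Set.Ioo (0 : ℝ) T, ∀ x, ∀ j : Fin 3,
    deriv (fun s => u s j x) t - (∑ i : Fin 3, pd i (pd i (⇑(u t j))) x)
      + (∑ i : Fin 3, u t i x * pd i (⇑(u t j)) x) + pd j (⇑(p t)) x = 0

/-- The space-time integral `∫₀ᵀ (‖ω(τ)‖_{Ḃ^{-α}_{∞,∞}}^{2/(2-α)} +
‖ω(τ)‖_{Ḃ^{-1-α}_{∞,∞}}^{2/(1-α)}) dτ` of the vorticity `ω = curl u`. -/
def vortBesovIntegral (χ : E3 → ℝ) (α T : ℝ) (u : ℝ → Fin 3 → 𝓢(E3, ℝ)) : ℝ≥0∞ :=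
  ∫⁻ τ in Set.Ioo (0 : ℝ) T,
    vecBesovInf χ (-α) (curlS (u τ)) ^ (2 / (2 - α))
      + vecBesovInf χ (-1 - α) (curlS (u τ)) ^ (2 / (1 - α))

/-!
Testing the vorticity equation with `ω` shows that the enstrophy `‖ω‖²` grows at the rate
`2 (∫ ((ω·∇)u)·ω - ‖∇ω‖²)`, all norms being `L²` norms. Each of the trilinear integrals
`∫ ωᵢ ∂ᵢuₖ ωₖ` is the limit of the integrals with both vorticity factors truncated to frequencies
below `2^N`. The truncation at `2^N ≈ Λ` is at most a multiple of
`‖ω‖_{Ḃ^{-α}_{∞,∞}} Λ^α ‖∇u‖ ‖ω‖`, and the telescoping sum over the higher frequencies, in which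
a gradient pays for each dyadic shell, is at most a multiple of
`‖ω‖_{Ḃ^{-α}_{∞,∞}} Λ^{α-1} ‖∇u‖ ‖∇ω‖`. Since `‖∇u‖ = ‖ω‖`, the choice
`Λ = ‖ω‖_{Ḃ^{-α}_{∞,∞}}^{1/(2-α)}` and Young's inequality absorb `‖∇ω‖²` and leave
`C ‖ω‖_{Ḃ^{-α}_{∞,∞}}^{2/(2-α)} ‖ω‖²`, to which Grönwall's inequality applies.
The energy `‖u‖²` does not increase.
-/

open scoped LineDeriv Topology NNReal RealInnerProductSpace Laplacian

/-! ### `L²` norms of Schwartz functions -/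

section SchwartzL2

variable {V : Type*} [NormedAddCommGroup V] [NormedSpace ℝ V] [MeasureSpace V] [BorelSpace V]
  [SecondCountableTopology V] [(volume : Measure V).HasTemperateGrowth]
  {F G : Type*} [NormedAddCommGroup F] [NormedSpace ℝ F] [NormedAddCommGroup G] [NormedSpace ℝ G]

/-- The class in `L²` of a Schwartz function, as a linear map: all `L²` norms and pairings below
are norms and inner products of such classes. -/
def toL2 : 𝓢(V, F) →L[ℝ] Lp F 2 (volume : Measure V) := SchwartzMap.toLpCLM ℝ F 2 volume

lemma eLpNorm_two_eq_ofReal_norm_toL2 (f : 𝓢(V, F)) :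
    eLpNorm f 2 volume = ENNReal.ofReal ‖toL2 f‖ := by
  rw [toL2, SchwartzMap.toLpCLM_apply, SchwartzMap.norm_toLp,
    ENNReal.ofReal_toReal (f.memLp 2 volume).eLpNorm_ne_top]

lemma norm_toL2_eq_sqrt (f : 𝓢(V, F)) : ‖toL2 f‖ = √(∫ x, ‖f x‖ ^ 2) := by
  simpa [Real.sqrt_eq_rpow] using!
    SchwartzMap.norm_toLp' (f := f) (p := 2) (μ := volume) (by simp) (by simp)

lemma norm_toL2_sq (f : 𝓢(V, F)) : ‖toL2 f‖ ^ 2 = ∫ x, ‖f x‖ ^ 2 := by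
  rw [norm_toL2_eq_sqrt, Real.sq_sqrt (integral_nonneg fun x => by positivity)]

lemma inner_toL2 (f g : 𝓢(V, ℝ)) : ⟪toL2 f, toL2 g⟫ = ∫ x, f x * g x := by
  rw [MeasureTheory.L2.inner_def]
  refine integral_congr_ae ?_
  filter_upwards [f.coeFn_toLp 2 volume, g.coeFn_toLp 2 volume] with x hf hg
  rw [toL2, SchwartzMap.toLpCLM_apply, SchwartzMap.toLpCLM_apply, hf, hg, real_inner_comm]
  rfl

lemma integrable_norm_sq (f : 𝓢(V, F)) : Integrable fun x => ‖f x‖ ^ 2 :=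
  (f.memLp 2).integrable_norm_pow (by simp)

lemma integrable_norm_mul_norm (f : 𝓢(V, F)) (g : 𝓢(V, G)) :
    Integrable fun x => ‖f x‖ * ‖g x‖ :=
  MemLp.integrable_mul (p := 2) (q := 2) (f.memLp 2).norm (g.memLp 2).norm

lemma integral_norm_mul_norm_le (f : 𝓢(V, F)) (g : 𝓢(V, G)) :
    ∫ x, ‖f x‖ * ‖g x‖ ≤ ‖toL2 f‖ * ‖toL2 g‖ := by
  have h := integral_mul_le_Lp_mul_Lq_of_nonneg (μ := (volume : Measure V))
    (f := fun x => ‖f x‖) (g := fun x => ‖g x‖) Real.HolderConjugate.two_two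
    (ae_of_all _ fun x => norm_nonneg _) (ae_of_all _ fun x => norm_nonneg _)
    (by simpa using (f.memLp 2).norm) (by simpa using (g.memLp 2).norm)
  simpa only [norm_toL2_eq_sqrt, Real.sqrt_eq_rpow, Real.rpow_ofNat] using h

variable {𝕜 : Type*} [RCLike 𝕜]

lemma integrable_mul_mul (f m g : 𝓢(V, 𝕜)) : Integrable fun x => f x * m x * g x := by
  refine ((integrable_norm_mul_norm m g).const_mul (SchwartzMap.seminorm ℝ 0 0 f)).mono'
    (by fun_prop) (ae_of_all _ fun x => ?_)
  rw [norm_mul, norm_mul, mul_assoc]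
  exact mul_le_mul_of_nonneg_right (SchwartzMap.norm_le_seminorm ℝ f x) (by positivity)

lemma norm_integral_mul_mul_le_of_left {f m g : 𝓢(V, 𝕜)} {L : ℝ} (hL : ∀ x, ‖f x‖ ≤ L) :
    ‖∫ x, f x * m x * g x‖ ≤ L * ‖toL2 m‖ * ‖toL2 g‖ := by
  have hL0 : 0 ≤ L := (norm_nonneg _).trans (hL 0)
  calc ‖∫ x, f x * m x * g x‖ ≤ ∫ x, L * (‖m x‖ * ‖g x‖) := by
        refine norm_integral_le_of_norm_le ((integrable_norm_mul_norm m g).const_mul L)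
          (ae_of_all _ fun x => ?_)
        rw [norm_mul, norm_mul, mul_assoc]
        exact mul_le_mul_of_nonneg_right (hL x) (by positivity)
    _ ≤ L * ‖toL2 m‖ * ‖toL2 g‖ := by
        rw [integral_const_mul, mul_assoc]
        exact mul_le_mul_of_nonneg_left (integral_norm_mul_norm_le m g) hL0

lemma norm_integral_mul_mul_le_of_right {f m g : 𝓢(V, 𝕜)} {L : ℝ} (hL : ∀ x, ‖g x‖ ≤ L) :
    ‖∫ x, f x * m x * g x‖ ≤ L * ‖toL2 m‖ * ‖toL2 f‖ := by
  simpa only [mul_comm, mul_left_comm] using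
    norm_integral_mul_mul_le_of_left (m := m) (g := f) hL

lemma norm_integral_mul_mul_le_of_middle {f m g : 𝓢(V, 𝕜)} {L : ℝ} (hL : ∀ x, ‖m x‖ ≤ L) :
    ‖∫ x, f x * m x * g x‖ ≤ L * ‖toL2 f‖ * ‖toL2 g‖ := by
  simpa only [mul_comm, mul_left_comm] using
    norm_integral_mul_mul_le_of_left (m := f) (g := g) hL

lemma integral_mul_mul_sub_integral (f f' m g g' : 𝓢(V, 𝕜)) :
    (∫ x, f x * m x * g x) - ∫ x, f' x * m x * g' x =
      (∫ x, (f - f') x * m x * g x) + ∫ x, f' x * m x * (g - g') x := by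
  rw [← integral_sub (integrable_mul_mul _ _ _) (integrable_mul_mul _ _ _),
    ← integral_add (integrable_mul_mul _ _ _) (integrable_mul_mul _ _ _)]
  congr with x
  simp only [sub_apply]
  ring

end SchwartzL2

section VectorFields

variable {V : Type*} [NormedAddCommGroup V] [NormedSpace ℝ V] [MeasureSpace V] [BorelSpace V]
  [SecondCountableTopology V] [(volume : Measure V).HasTemperateGrowth]
  {ι F : Type*} [Fintype ι] [NormedAddCommGroup F] [NormedSpace ℝ F]

/-- The `L²` norm of a finite family of Schwartz functions, such as the components of a vector
field. -/
def vecNorm (v : ι → 𝓢(V, F)) : ℝ := √(∑ j, ‖toL2 (v j)‖ ^ 2)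

lemma vecNorm_sq (v : ι → 𝓢(V, F)) : vecNorm v ^ 2 = ∑ j, ‖toL2 (v j)‖ ^ 2 :=
  Real.sq_sqrt (Finset.sum_nonneg fun _ _ => sq_nonneg _)

lemma vecNorm_nonneg (v : ι → 𝓢(V, F)) : 0 ≤ vecNorm v :=
  Real.sqrt_nonneg _

lemma norm_toL2_le_vecNorm (v : ι → 𝓢(V, F)) (j : ι) : ‖toL2 (v j)‖ ≤ vecNorm v :=
  Real.le_sqrt_of_sq_le (Finset.single_le_sum (f := fun j => ‖toL2 (v j)‖ ^ 2)
    (fun _ _ => sq_nonneg _) (Finset.mem_univ j))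

end VectorFields

section Gradient

variable {n : ℕ} {ι F : Type*} [Fintype ι] [NormedAddCommGroup F] [NormedSpace ℝ F]

/-- The standard coordinate vector `eᵢ` of `ℝⁿ`. -/
abbrev stdVec (i : Fin n) : EuclideanSpace ℝ (Fin n) := EuclideanSpace.single i 1

/-- The `L²` norm of the gradient of a Schwartz function on `ℝⁿ`. -/
def gradNorm (f : 𝓢(EuclideanSpace ℝ (Fin n), F)) : ℝ :=
  vecNorm fun i : Fin n => (∂_{stdVec i} f : 𝓢(EuclideanSpace ℝ (Fin n), F))

lemma gradNorm_sq (f : 𝓢(EuclideanSpace ℝ (Fin n), F)) :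
    gradNorm f ^ 2 = ∑ i : Fin n, ‖toL2 (∂_{stdVec i} f)‖ ^ 2 :=
  vecNorm_sq _

lemma gradNorm_nonneg (f : 𝓢(EuclideanSpace ℝ (Fin n), F)) : 0 ≤ gradNorm f :=
  vecNorm_nonneg _

/-- The `L²` norm of the full gradient (Jacobian matrix) of a family of Schwartz functions. -/
def vecGradNorm (v : ι → 𝓢(EuclideanSpace ℝ (Fin n), F)) : ℝ := √(∑ j, gradNorm (v j) ^ 2)

lemma vecGradNorm_sq (v : ι → 𝓢(EuclideanSpace ℝ (Fin n), F)) :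
    vecGradNorm v ^ 2 = ∑ j, gradNorm (v j) ^ 2 :=
  Real.sq_sqrt (Finset.sum_nonneg fun _ _ => sq_nonneg _)

lemma vecGradNorm_nonneg (v : ι → 𝓢(EuclideanSpace ℝ (Fin n), F)) : 0 ≤ vecGradNorm v :=
  Real.sqrt_nonneg _

lemma gradNorm_le_vecGradNorm (v : ι → 𝓢(EuclideanSpace ℝ (Fin n), F)) (j : ι) :
    gradNorm (v j) ≤ vecGradNorm v :=
  Real.le_sqrt_of_sq_le (Finset.single_le_sum (f := fun j => gradNorm (v j) ^ 2)
    (fun _ _ => sq_nonneg _) (Finset.mem_univ j))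

lemma norm_toL2_lineDerivOp_le_vecGradNorm (v : ι → 𝓢(EuclideanSpace ℝ (Fin n), F)) (i : Fin n)
    (j : ι) : ‖toL2 (∂_{stdVec i} (v j))‖ ≤ vecGradNorm v :=
  (norm_toL2_le_vecNorm (fun i : Fin n => (∂_{stdVec i} (v j) : 𝓢(EuclideanSpace ℝ (Fin n), F)))
    i).trans (gradNorm_le_vecGradNorm v j)

end Gradient

section Plancherel

variable {n : ℕ}

lemma norm_toL2_fourier (f : 𝓢(EuclideanSpace ℝ (Fin n), ℂ)) : ‖toL2 (𝓕 f)‖ = ‖toL2 f‖ :=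
  SchwartzMap.norm_fourier_toL2_eq f

lemma norm_sq_mul_norm_fourier_sq_le (f : 𝓢(EuclideanSpace ℝ (Fin n), ℂ))
    (ξ : EuclideanSpace ℝ (Fin n)) :
    ‖ξ‖ ^ 2 * ‖𝓕 f ξ‖ ^ 2 ≤ ∑ i : Fin n, ‖𝓕 (∂_{stdVec i} f) ξ‖ ^ 2 := by
  rw [EuclideanSpace.real_norm_sq_eq, Finset.sum_mul]
  refine Finset.sum_le_sum fun i _ => ?_
  have hpi : (1 : ℝ) ≤ (2 * π) ^ 2 := one_le_pow₀ (by linarith [Real.pi_gt_three])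
  have hfourier : ‖𝓕 (∂_{stdVec i} f) ξ‖ = 2 * π * (|ξ i| * ‖𝓕 f ξ‖) := by
    rw [SchwartzMap.fourier_lineDerivOp_eq, smul_apply,
      SchwartzMap.smulLeftCLM_apply_apply (Function.hasTemperateGrowth_inner_left _)]
    simp [EuclideanSpace.inner_single_right, abs_of_pos Real.pi_pos]
  rw [hfourier, mul_pow (2 * π), mul_pow |ξ i|, sq_abs]
  exact le_mul_of_one_le_left (by positivity) hpi

lemma norm_toL2_le_mul_gradNorm {f g : 𝓢(EuclideanSpace ℝ (Fin n), ℂ)} {c : ℝ} (hc : 0 ≤ c)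
    (h : ∀ ξ, ‖𝓕 f ξ‖ ≤ c * ‖ξ‖ * ‖𝓕 g ξ‖) : ‖toL2 f‖ ≤ c * gradNorm g := by
  refine le_of_sq_le_sq ?_ (mul_nonneg hc (gradNorm_nonneg g))
  have hpoint (ξ) : ‖𝓕 f ξ‖ ^ 2 ≤ c ^ 2 * ∑ i : Fin n, ‖𝓕 (∂_{stdVec i} g) ξ‖ ^ 2 :=
    calc ‖𝓕 f ξ‖ ^ 2 ≤ (c * ‖ξ‖ * ‖𝓕 g ξ‖) ^ 2 := by gcongr; exact h ξ
      _ = c ^ 2 * (‖ξ‖ ^ 2 * ‖𝓕 g ξ‖ ^ 2) := by ring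
      _ ≤ _ := by gcongr; exact norm_sq_mul_norm_fourier_sq_le g ξ
  calc ‖toL2 f‖ ^ 2 = ∫ ξ, ‖𝓕 f ξ‖ ^ 2 := by rw [← norm_toL2_fourier, norm_toL2_sq]
    _ ≤ ∫ ξ, c ^ 2 * ∑ i : Fin n, ‖𝓕 (∂_{stdVec i} g) ξ‖ ^ 2 :=
        integral_mono (integrable_norm_sq _)
          ((integrable_finsetSum _ fun i _ => integrable_norm_sq _).const_mul _) hpoint
    _ = (c * gradNorm g) ^ 2 := by
        rw [integral_const_mul, integral_finsetSum _ fun i _ => integrable_norm_sq _, mul_pow,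
          gradNorm_sq]
        simp only [← norm_toL2_sq, norm_toL2_fourier]

end Plancherel

/-! ### Low-frequency projections -/

section LowPass

variable {n : ℕ} {χ : EuclideanSpace ℝ (Fin n) → ℝ}

lemma norm_le_of_eLpNorm_top_le {X F : Type*} [TopologicalSpace X] [MeasurableSpace X]
    [NormedAddCommGroup F] {μ : Measure X} [μ.IsOpenPosMeasure] {f : X → F} (hf : Continuous f)
    {B : ℝ≥0} (h : eLpNorm f ⊤ μ ≤ B) (x : X) : ‖f x‖ ≤ B := by
  have hae : ∀ᵐ y ∂μ, ‖f y‖ ≤ B := by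
    filter_upwards [ae_le_eLpNormEssSup (f := f) (μ := μ)] with y hy
    exact enorm_le_coe.1 (hy.trans h)
  have hclosed : IsClosed {y | ‖f y‖ ≤ B} := isClosed_le hf.norm continuous_const
  exact hclosed.closure_eq.subset (Measure.dense_of_ae hae x)

lemma IsLPCutoff.nonneg (hχ : IsLPCutoff χ) (ξ : EuclideanSpace ℝ (Fin n)) : 0 ≤ χ ξ :=
  hχ.2.2.2.1 ξ

lemma IsLPCutoff.le_one (hχ : IsLPCutoff χ) (ξ : EuclideanSpace ℝ (Fin n)) : χ ξ ≤ 1 :=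
  hχ.2.2.2.2.1 ξ

lemma IsLPCutoff.eq_zero (hχ : IsLPCutoff χ) {ξ : EuclideanSpace ℝ (Fin n)} (hξ : 4 / 3 < ‖ξ‖) :
    χ ξ = 0 :=
  hχ.2.2.2.2.2.2 ξ hξ

lemma IsLPCutoff.norm_eq (hχ : IsLPCutoff χ) (ξ : EuclideanSpace ℝ (Fin n)) :
    ‖(χ ξ : ℂ)‖ = χ ξ := by
  rw [Complex.norm_real, Real.norm_of_nonneg (hχ.nonneg ξ)]

lemma IsLPCutoff.abs_sub_one_le (hχ : IsLPCutoff χ) (ξ : EuclideanSpace ℝ (Fin n)) :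
    |χ ξ - 1| ≤ 2 * ‖ξ‖ := by
  rcases le_or_gt ‖ξ‖ (3 / 4) with h | h
  · rw [hχ.2.2.2.2.2.1 ξ h, sub_self, abs_zero]
    positivity
  · rw [abs_le]
    constructor <;> linarith [hχ.nonneg ξ, hχ.le_one ξ]

lemma IsLPCutoff.hasTemperateGrowth_comp_smul (hχ : IsLPCutoff χ) (c : ℝ) :
    Function.HasTemperateGrowth fun ξ => (χ (c • ξ) : ℂ) :=
  Complex.hasTemperateGrowth_ofReal.comp
    ((HasCompactSupport.hasTemperateGrowth hχ.2.1 hχ.1).comp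
      (c • ContinuousLinearMap.id ℝ (EuclideanSpace ℝ (Fin n))).hasTemperateGrowth)

variable (χ) in
/-- The low-frequency projection `S_N` as a map of Schwartz functions. -/
def lowPass (N : ℤ) (f : 𝓢(EuclideanSpace ℝ (Fin n), ℂ)) : 𝓢(EuclideanSpace ℝ (Fin n), ℂ) :=
  SchwartzMap.fourierMultiplierCLM ℂ (fun ξ => (χ ((2 : ℝ) ^ (-N) • ξ) : ℂ)) f

variable (f : 𝓢(EuclideanSpace ℝ (Fin n), ℂ)) (N : ℤ)

lemma fourier_lowPass (hχ : IsLPCutoff χ) (ξ : EuclideanSpace ℝ (Fin n)) :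
    𝓕 (lowPass χ N f) ξ = χ ((2 : ℝ) ^ (-N) • ξ) * 𝓕 f ξ := by
  rw [lowPass, SchwartzMap.fourierMultiplierCLM_apply, FourierTransform.fourier_fourierInv_eq,
    SchwartzMap.smulLeftCLM_apply_apply (hχ.hasTemperateGrowth_comp_smul _), smul_eq_mul]

lemma fourier_sub_apply (f g : 𝓢(EuclideanSpace ℝ (Fin n), ℂ)) (ξ : EuclideanSpace ℝ (Fin n)) :
    𝓕 (f - g) ξ = 𝓕 f ξ - 𝓕 g ξ :=
  congrArg (· ξ) (map_sub (FourierTransform.fourierCLM ℂ 𝓢(EuclideanSpace ℝ (Fin n), ℂ)) f g)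

lemma Sproj_eq_lowPass (hχ : IsLPCutoff χ) : Sproj χ N f = lowPass χ N f := by
  rw [← FourierTransform.fourierInv_fourier_eq (F := 𝓢(EuclideanSpace ℝ (Fin n), ℂ))
    (lowPass χ N f), SchwartzMap.fourierInv_coe, Sproj]
  congr with ξ
  rw [fourier_lowPass f N hχ, SchwartzMap.fourier_coe]

lemma Dproj_eq_lowPass_sub (hχ : IsLPCutoff χ) :
    Dproj χ N f = ⇑(lowPass χ (N + 1) f - lowPass χ N f) := by
  rw [← FourierTransform.fourierInv_fourier_eq (F := 𝓢(EuclideanSpace ℝ (Fin n), ℂ))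
    (lowPass χ (N + 1) f - lowPass χ N f), SchwartzMap.fourierInv_coe, Dproj]
  congr with ξ
  rw [fourier_sub_apply, fourier_lowPass f _ hχ, fourier_lowPass f _ hχ, SchwartzMap.fourier_coe]
  push_cast
  ring

lemma norm_toL2_lowPass_le (hχ : IsLPCutoff χ) : ‖toL2 (lowPass χ N f)‖ ≤ ‖toL2 f‖ := by
  rw [← norm_toL2_fourier, ← norm_toL2_fourier f, norm_toL2_eq_sqrt, norm_toL2_eq_sqrt]
  refine Real.sqrt_le_sqrt
    (integral_mono (integrable_norm_sq _) (integrable_norm_sq _) fun ξ => ?_)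
  dsimp only
  rw [fourier_lowPass f N hχ, norm_mul, hχ.norm_eq]
  have := hχ.nonneg ((2 : ℝ) ^ (-N) • ξ)
  gcongr
  exact mul_le_of_le_one_left (norm_nonneg _) (hχ.le_one _)

lemma norm_toL2_lowPass_sub_self_le (hχ : IsLPCutoff χ) :
    ‖toL2 (lowPass χ N f - f)‖ ≤ 2 * 2 ^ (-N) * gradNorm f := by
  refine norm_toL2_le_mul_gradNorm (by positivity) fun ξ => ?_
  have hfourier : 𝓕 (lowPass χ N f - f) ξ = (χ ((2 : ℝ) ^ (-N) • ξ) - 1 : ℝ) * 𝓕 f ξ := by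
    rw [fourier_sub_apply, fourier_lowPass f N hχ]
    push_cast
    ring
  rw [hfourier, norm_mul, Complex.norm_real, Real.norm_eq_abs]
  gcongr
  refine (hχ.abs_sub_one_le _).trans_eq ?_
  rw [norm_smul, Real.norm_of_nonneg (by positivity), mul_assoc]

lemma norm_toL2_lowPass_succ_sub_le (hχ : IsLPCutoff χ) :
    ‖toL2 (lowPass χ (N + 1) f - lowPass χ N f)‖ ≤ 3 * 2 ^ (-N) * gradNorm f := by
  rw [← sub_sub_sub_cancel_right _ _ f, map_sub]
  refine (norm_sub_le _ _).trans ((add_le_add (norm_toL2_lowPass_sub_self_le f (N + 1) hχ)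
    (norm_toL2_lowPass_sub_self_le f N hχ)).trans_eq ?_)
  rw [neg_add, zpow_add₀ two_ne_zero, zpow_neg_one]
  ring

lemma tendsto_lowPass_atBot [NeZero n] (hχ : IsLPCutoff χ) (x : EuclideanSpace ℝ (Fin n)) :
    Tendsto (fun k : ℕ => lowPass χ (N - k) f x) atTop (𝓝 0) := by
  simp only [← Sproj_eq_lowPass f _ hχ, Sproj, Real.fourierInv_eq']
  rw [← integral_zero (EuclideanSpace ℝ (Fin n)) ℂ]
  refine tendsto_integral_of_dominated_convergence (fun ξ => ‖𝓕 f ξ‖) (fun k => ?_)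
    (𝓕 f).integrable.norm (fun k => ae_of_all _ fun ξ => ?_) ?_
  · have := (hχ.hasTemperateGrowth_comp_smul ((2 : ℝ) ^ (-(N - (k : ℤ))))).1.continuous
    have : Continuous (𝓕 ⇑f) := (𝓕 f).continuous
    exact Continuous.aestronglyMeasurable (by fun_prop)
  · rw [norm_smul, Complex.norm_exp_ofReal_mul_I, one_mul, norm_mul, hχ.norm_eq]
    exact mul_le_of_le_one_left (norm_nonneg _) (hχ.le_one _)
  · filter_upwards [Measure.ae_ne volume (0 : EuclideanSpace ℝ (Fin n))] with ξ hξ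
    have hgrow : Tendsto (fun k : ℕ => (2 : ℝ) ^ k * (2 ^ (-N) * ‖ξ‖)) atTop atTop :=
      (tendsto_pow_atTop_atTop_of_one_lt one_lt_two).atTop_mul_const
        (mul_pos (by positivity) (norm_pos_iff.2 hξ))
    refine tendsto_const_nhds.congr' ?_
    filter_upwards [hgrow.eventually_gt_atTop (4 / 3)] with k hk
    rw [hχ.eq_zero, Complex.ofReal_zero, zero_mul, smul_zero]
    rwa [norm_smul, Real.norm_of_nonneg (by positivity), neg_sub, sub_eq_add_neg,
      zpow_add₀ two_ne_zero, zpow_natCast, mul_assoc]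

variable {f}

lemma norm_Dproj_le_of_besovNorm_le (hχ : IsLPCutoff χ) {α : ℝ} {A : ℝ≥0}
    (hA : besovNorm χ (-α) ⊤ ⊤ f ≤ A) (x : EuclideanSpace ℝ (Fin n)) :
    ‖Dproj χ N f x‖ ≤ A * ((2 : ℝ) ^ α) ^ N := by
  have hcont : Continuous (Dproj χ N f) := by
    rw [Dproj_eq_lowPass_sub f N hχ]
    exact SchwartzMap.continuous _
  have hblock : (2 : ℝ≥0∞) ^ (N * -α) * eLpNorm (Dproj χ N f) ⊤ volume ≤ A := by
    rw [besovNorm, lqNorm, if_pos rfl] at hA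
    exact (le_iSup _ N).trans hA
  have hweight : (2 : ℝ≥0∞) ^ (N * -α) = ((((2 : ℝ≥0) ^ α) ^ N : ℝ≥0) : ℝ≥0∞)⁻¹ := by
    rw [mul_neg, ENNReal.rpow_neg, mul_comm, ← NNReal.rpow_intCast, ← NNReal.rpow_mul,
      ENNReal.coe_rpow_of_ne_zero two_ne_zero, ENNReal.coe_ofNat]
  rw [hweight, ENNReal.inv_mul_le_iff (by positivity) ENNReal.coe_ne_top, mul_comm] at hblock
  have hbound : ‖Dproj χ N f x‖ ≤ (A * ((2 : ℝ≥0) ^ α) ^ N : ℝ≥0) :=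
    norm_le_of_eLpNorm_top_le hcont (hblock.trans_eq (ENNReal.coe_mul _ _).symm) x
  simpa using hbound

/-- The constant in the bound of `S_N f` by the norm of `f` in the homogeneous Besov space of
order `-α`: the sum of the geometric series `∑_{k ≥ 1} 2^{-kα}`. -/
def lowPassConst (α : ℝ) : ℝ := ((2 : ℝ) ^ α - 1)⁻¹

lemma lowPassConst_pos {α : ℝ} (hα : 0 < α) : 0 < lowPassConst α :=
  inv_pos.2 (sub_pos.2 (Real.one_lt_rpow one_lt_two hα))

lemma norm_lowPass_le [NeZero n] (hχ : IsLPCutoff χ) {α : ℝ} (hα : 0 < α) {A : ℝ≥0}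
    (hA : besovNorm χ (-α) ⊤ ⊤ f ≤ A) (x : EuclideanSpace ℝ (Fin n)) :
    ‖lowPass χ N f x‖ ≤ lowPassConst α * A * ((2 : ℝ) ^ α) ^ N := by
  have ha : 1 < (2 : ℝ) ^ α := Real.one_lt_rpow one_lt_two hα
  have ha0 : (2 : ℝ) ^ α ≠ 0 := by positivity
  have hstep (k : ℕ) : dist (lowPass χ (N - k) f x) (lowPass χ (N - (k + 1 : ℕ)) f x) ≤
      A * ((2 : ℝ) ^ α) ^ (N - 1) * ((2 : ℝ) ^ α)⁻¹ ^ k := by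
    have hblock := norm_Dproj_le_of_besovNorm_le (N - (k + 1 : ℕ)) hχ hA x
    have hindex : N - (k + 1 : ℕ) + 1 = N - k := by push_cast; ring
    have hweight : ((2 : ℝ) ^ α) ^ (N - (k + 1 : ℕ)) =
        ((2 : ℝ) ^ α) ^ (N - 1) * ((2 : ℝ) ^ α)⁻¹ ^ k := by
      rw [inv_pow, ← zpow_natCast, ← zpow_neg, ← zpow_add₀ ha0]
      push_cast
      ring_nf
    rwa [Dproj_eq_lowPass_sub _ _ hχ, sub_apply, hindex, hweight, ← mul_assoc,
      ← dist_eq_norm] at hblock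
  have hsum := dist_le_of_le_geometric_of_tendsto₀ _ _ (inv_lt_one_of_one_lt₀ ha) hstep
    (tendsto_lowPass_atBot f N hχ x)
  rw [dist_zero_right, Nat.cast_zero, sub_zero] at hsum
  refine hsum.trans_eq ?_
  have : (2 : ℝ) ^ α - 1 ≠ 0 := (sub_pos.2 ha).ne'
  rw [zpow_sub_one₀ ha0, lowPassConst]
  field_simp

end LowPass

/-! ### The trilinear estimate -/

section Trilinear

variable {n : ℕ} {χ : EuclideanSpace ℝ (Fin n) → ℝ}

lemma tendsto_zpow_neg_add_atTop (J : ℤ) :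
    Tendsto (fun k : ℕ => (2 : ℝ) ^ (-(J + k))) atTop (𝓝 0) := by
  have hgeom := (tendsto_pow_atTop_nhds_zero_of_lt_one (r := (2 : ℝ)⁻¹) (by norm_num)
    (by norm_num)).const_mul ((2 : ℝ) ^ (-J))
  simpa only [neg_add, zpow_add₀ (two_ne_zero (α := ℝ)), zpow_neg, zpow_natCast, inv_pow,
    mul_zero] using hgeom

variable (f m g : 𝓢(EuclideanSpace ℝ (Fin n), ℂ)) (N : ℤ)

variable (χ) in
/-- The trilinear form `∫ f m g` with `f` and `g` truncated to the frequencies below `2^N`. -/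
def truncatedTrilinear : ℂ := ∫ x, lowPass χ N f x * m x * lowPass χ N g x

lemma tendsto_truncatedTrilinear (hχ : IsLPCutoff χ) :
    Tendsto (fun k : ℕ => truncatedTrilinear χ f m g (N + k)) atTop
      (𝓝 (∫ x, f x * m x * g x)) := by
  have hm := SchwartzMap.norm_le_seminorm ℝ m
  set M := SchwartzMap.seminorm ℝ 0 0 m
  have : 0 ≤ M := (norm_nonneg _).trans (hm 0)
  rw [tendsto_iff_norm_sub_tendsto_zero]
  have hlim := (tendsto_zpow_neg_add_atTop N).mul_const
    (M * (2 * gradNorm f) * ‖toL2 g‖ + M * ‖toL2 f‖ * (2 * gradNorm g))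
  rw [zero_mul] at hlim
  refine squeeze_zero (fun _ => norm_nonneg _) (fun k => ?_) hlim
  rw [truncatedTrilinear, integral_mul_mul_sub_integral]
  calc _ ≤ _ := norm_add_le _ _
    _ ≤ M * ‖toL2 (lowPass χ (N + k) f - f)‖ * ‖toL2 (lowPass χ (N + k) g)‖ +
        M * ‖toL2 f‖ * ‖toL2 (lowPass χ (N + k) g - g)‖ :=
      add_le_add (norm_integral_mul_mul_le_of_middle hm) (norm_integral_mul_mul_le_of_middle hm)
    _ ≤ M * (2 * 2 ^ (-(N + k : ℤ)) * gradNorm f) * ‖toL2 g‖ +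
        M * ‖toL2 f‖ * (2 * 2 ^ (-(N + k : ℤ)) * gradNorm g) := by
      gcongr
      · have := gradNorm_nonneg f
        positivity
      · exact norm_toL2_lowPass_sub_self_le f _ hχ
      · exact norm_toL2_lowPass_le g _ hχ
      · exact norm_toL2_lowPass_sub_self_le g _ hχ
    _ = _ := by ring

variable {α : ℝ} {A : ℝ≥0} {f g}

lemma norm_truncatedTrilinear_le [NeZero n] (hχ : IsLPCutoff χ) (hα : 0 < α)
    (hf : besovNorm χ (-α) ⊤ ⊤ f ≤ A) :
    ‖truncatedTrilinear χ f m g N‖ ≤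
      lowPassConst α * A * ((2 : ℝ) ^ α) ^ N * (‖toL2 m‖ * ‖toL2 g‖) := by
  have := lowPassConst_pos hα
  refine (norm_integral_mul_mul_le_of_left (norm_lowPass_le N hχ hα hf)).trans ?_
  rw [mul_assoc _ ‖toL2 m‖]
  gcongr
  exact norm_toL2_lowPass_le g N hχ

lemma norm_truncatedTrilinear_succ_sub_le [NeZero n] (hχ : IsLPCutoff χ) (hα : 0 < α)
    (hα1 : α < 1) (hf : besovNorm χ (-α) ⊤ ⊤ f ≤ A) (hg : besovNorm χ (-α) ⊤ ⊤ g ≤ A) :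
    ‖truncatedTrilinear χ f m g (N + 1) - truncatedTrilinear χ f m g N‖ ≤
      6 * lowPassConst α * A * (‖toL2 m‖ * (gradNorm f + gradNorm g)) *
        ((2 : ℝ) ^ (α - 1)) ^ N := by
  have hc := lowPassConst_pos hα
  have := gradNorm_nonneg f
  have := gradNorm_nonneg g
  have ha2 : (2 : ℝ) ^ α ≤ 2 := by
    simpa using Real.rpow_le_rpow_of_exponent_le one_le_two hα1.le
  have hsplit : ((2 : ℝ) ^ (α - 1)) ^ N = ((2 : ℝ) ^ α) ^ N * 2 ^ (-N) := by
    rw [Real.rpow_sub_one two_ne_zero, div_zpow, zpow_neg, div_eq_mul_inv]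
  rw [truncatedTrilinear, truncatedTrilinear, integral_mul_mul_sub_integral, hsplit]
  calc _ ≤ _ := norm_add_le _ _
    _ ≤ lowPassConst α * A * ((2 : ℝ) ^ α) ^ (N + 1) * ‖toL2 m‖ *
          ‖toL2 (lowPass χ (N + 1) f - lowPass χ N f)‖ +
        lowPassConst α * A * ((2 : ℝ) ^ α) ^ N * ‖toL2 m‖ *
          ‖toL2 (lowPass χ (N + 1) g - lowPass χ N g)‖ :=
      add_le_add (norm_integral_mul_mul_le_of_right (norm_lowPass_le _ hχ hα hg))
        (norm_integral_mul_mul_le_of_left (norm_lowPass_le _ hχ hα hf))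
    _ ≤ lowPassConst α * A * (((2 : ℝ) ^ α) ^ N * 2) * ‖toL2 m‖ *
          (3 * 2 ^ (-N) * gradNorm f) +
        lowPassConst α * A * (((2 : ℝ) ^ α) ^ N * 2) * ‖toL2 m‖ *
          (3 * 2 ^ (-N) * gradNorm g) := by
      rw [zpow_add_one₀ (by positivity)]
      gcongr
      · exact norm_toL2_lowPass_succ_sub_le f N hχ
      · exact le_mul_of_one_le_right (by positivity) one_le_two
      · exact norm_toL2_lowPass_succ_sub_le g N hχ
    _ = _ := by ring

/-- The constant in the trilinear estimate `norm_integral_mul_mul_le_of_besovNorm_le`; the second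
factor sums the geometric series `∑_{k ≥ 0} 2^{k(α - 1)}` of the high frequencies. -/
def trilinearConst (α : ℝ) : ℝ := 12 * lowPassConst α * (1 - (2 : ℝ) ^ (α - 1))⁻¹

lemma lowPassConst_le_trilinearConst (hα : 0 < α) (hα1 : α < 1) :
    lowPassConst α ≤ trilinearConst α := by
  have hb : (2 : ℝ) ^ (α - 1) < 1 := Real.rpow_lt_one_of_one_lt_of_neg one_lt_two (by linarith)
  have hb0 : 0 < (2 : ℝ) ^ (α - 1) := by positivity
  have hinv : 1 ≤ (1 - (2 : ℝ) ^ (α - 1))⁻¹ := (one_le_inv₀ (by linarith)).2 (by linarith)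
  rw [trilinearConst]
  nlinarith [lowPassConst_pos hα]

lemma trilinearConst_pos (hα : 0 < α) (hα1 : α < 1) : 0 < trilinearConst α :=
  (lowPassConst_pos hα).trans_le (lowPassConst_le_trilinearConst hα hα1)

lemma norm_integral_mul_mul_le_of_dyadic [NeZero n] (hχ : IsLPCutoff χ) (hα : 0 < α)
    (hα1 : α < 1) (hf : besovNorm χ (-α) ⊤ ⊤ f ≤ A) (hg : besovNorm χ (-α) ⊤ ⊤ g ≤ A) :
    ‖∫ x, f x * m x * g x‖ ≤ trilinearConst α * A *
      (((2 : ℝ) ^ α) ^ N * (‖toL2 m‖ * ‖toL2 g‖) +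
        ((2 : ℝ) ^ (α - 1)) ^ N / 2 * (‖toL2 m‖ * (gradNorm f + gradNorm g))) := by
  have hb : (2 : ℝ) ^ (α - 1) < 1 := Real.rpow_lt_one_of_one_lt_of_neg one_lt_two (by linarith)
  have hstep (k : ℕ) : dist (truncatedTrilinear χ f m g (N + k))
      (truncatedTrilinear χ f m g (N + (k + 1 : ℕ))) ≤
      6 * lowPassConst α * A * (‖toL2 m‖ * (gradNorm f + gradNorm g)) * ((2 : ℝ) ^ (α - 1)) ^ N *
        ((2 : ℝ) ^ (α - 1)) ^ k := by
    have := norm_truncatedTrilinear_succ_sub_le m (N + k) hχ hα hα1 hf hg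
    rwa [← dist_eq_norm, dist_comm, zpow_add₀ (by positivity), zpow_natCast, ← mul_assoc,
      add_assoc] at this
  have htail := dist_le_of_le_geometric_of_tendsto₀ _ _ hb hstep
    (tendsto_truncatedTrilinear f m g N hχ)
  rw [Nat.cast_zero, add_zero, dist_comm, dist_eq_norm] at htail
  calc _ ≤ _ := norm_le_norm_add_norm_sub' _ (truncatedTrilinear χ f m g N)
    _ ≤ _ := add_le_add (norm_truncatedTrilinear_le m N hχ hα hf) htail
    _ ≤ trilinearConst α * A * ((2 : ℝ) ^ α) ^ N * (‖toL2 m‖ * ‖toL2 g‖) + _ := by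
      gcongr
      exact lowPassConst_le_trilinearConst hα hα1
    _ = _ := by rw [trilinearConst]; ring

/-- The low frequencies are paid for by the Besov norm alone, the high ones by a gradient. -/
lemma norm_integral_mul_mul_le_of_besovNorm_le [NeZero n] (hχ : IsLPCutoff χ) (hα : 0 < α)
    (hα1 : α < 1) (hf : besovNorm χ (-α) ⊤ ⊤ f ≤ A) (hg : besovNorm χ (-α) ⊤ ⊤ g ≤ A)
    {Λ : ℝ} (hΛ : 0 < Λ) :
    ‖∫ x, f x * m x * g x‖ ≤ trilinearConst α * A *
      (Λ ^ α * (‖toL2 m‖ * ‖toL2 g‖) +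
        Λ ^ (α - 1) * (‖toL2 m‖ * (gradNorm f + gradNorm g))) := by
  obtain ⟨N, hN, hN'⟩ := exists_mem_Ico_zpow hΛ one_lt_two
  have hlow : ((2 : ℝ) ^ α) ^ N ≤ Λ ^ α := by
    rw [Real.rpow_zpow_comm two_pos.le]
    exact Real.rpow_le_rpow (by positivity) hN hα.le
  have hhigh : ((2 : ℝ) ^ (α - 1)) ^ N / 2 ≤ Λ ^ (α - 1) := by
    have hone : (2 : ℝ) ^ (α - 1) ≥ 2⁻¹ := by
      simpa [Real.rpow_neg_one] using
        Real.rpow_le_rpow_of_exponent_le one_le_two (by linarith : -1 ≤ α - 1)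
    calc ((2 : ℝ) ^ (α - 1)) ^ N / 2 ≤ ((2 : ℝ) ^ (α - 1)) ^ (N + 1) := by
          rw [zpow_add_one₀ (by positivity), div_eq_mul_inv]
          gcongr
      _ = ((2 : ℝ) ^ (N + 1)) ^ (α - 1) := Real.rpow_zpow_comm two_pos.le _ _
      _ ≤ Λ ^ (α - 1) := Real.rpow_le_rpow_of_nonpos hΛ hN'.le (by linarith)
  have := trilinearConst_pos hα hα1
  have := gradNorm_nonneg f
  have := gradNorm_nonneg g
  refine (norm_integral_mul_mul_le_of_dyadic m N hχ hα hα1 hf hg).trans ?_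
  gcongr

end Trilinear

/-! ### Energy identities for divergence-free fields -/

section Derivatives

variable {V F : Type*} [NormedAddCommGroup V] [NormedSpace ℝ V]
  [NormedAddCommGroup F] [NormedSpace ℝ F]

lemma lineDerivOp_lineDerivOp_apply (v w : V) (f : 𝓢(V, F)) (x : V) :
    (∂_{w} (∂_{v} f) : 𝓢(V, F)) x = fderiv ℝ (fderiv ℝ f) x w v := by
  have hf : DifferentiableAt ℝ (fderiv ℝ f) x :=
    ((f.smooth 2).fderiv_right (m := 1) le_rfl).differentiable (by simp) x
  have hfun : ⇑(∂_{v} f : 𝓢(V, F)) = fun y => fderiv ℝ f y v := rfl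
  rw [SchwartzMap.lineDerivOp_apply_eq_fderiv, hfun,
    (hf.hasFDerivAt.clm_apply (hasFDerivAt_const v x)).fderiv]
  simp

lemma lineDerivOp_comm (v w : V) (f : 𝓢(V, F)) : ∂_{v} (∂_{w} f) = ∂_{w} (∂_{v} f) := by
  ext x
  rw [lineDerivOp_lineDerivOp_apply, lineDerivOp_lineDerivOp_apply]
  exact (f.smooth 2).contDiffAt.isSymmSndFDerivAt (by simp) v w

lemma lineDerivOp_sub (v : V) (f g : 𝓢(V, F)) : ∂_{v} (f - g) = ∂_{v} f - ∂_{v} g :=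
  map_sub (LineDeriv.lineDerivOpCLM ℝ 𝓢(V, F) v) f g

/-- The pointwise product of two real Schwartz functions. -/
def schwartzMul (f g : 𝓢(V, ℝ)) : 𝓢(V, ℝ) :=
  SchwartzMap.pairing (ContinuousLinearMap.mul ℝ ℝ) f g

lemma schwartzMul_apply (f g : 𝓢(V, ℝ)) (x : V) : schwartzMul f g x = f x * g x := rfl

lemma lineDerivOp_schwartzMul (v : V) (f g : 𝓢(V, ℝ)) :
    ∂_{v} (schwartzMul f g) = schwartzMul f (∂_{v} g) + schwartzMul (∂_{v} f) g := by
  ext x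
  have hfun : ⇑(schwartzMul f g) = ⇑f * ⇑g := rfl
  rw [SchwartzMap.lineDerivOp_apply_eq_fderiv, hfun,
    ((f.hasFDerivAt x).mul (g.hasFDerivAt x)).fderiv]
  simp [schwartzMul_apply, SchwartzMap.lineDerivOp_apply_eq_fderiv, mul_comm]

end Derivatives

section Energy

variable {n : ℕ}

lemma inner_toL2_lineDerivOp_right (f g : 𝓢(EuclideanSpace ℝ (Fin n), ℝ))
    (v : EuclideanSpace ℝ (Fin n)) : ⟪toL2 f, toL2 (∂_{v} g)⟫ = -⟪toL2 (∂_{v} f), toL2 g⟫ := by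
  rw [inner_toL2, inner_toL2]
  exact SchwartzMap.integral_mul_lineDerivOp_right_eq_neg_left f g v

lemma inner_toL2_schwartzMul_right (f g h : 𝓢(EuclideanSpace ℝ (Fin n), ℝ)) :
    ⟪toL2 f, toL2 (schwartzMul g h)⟫ = ⟪toL2 (schwartzMul g f), toL2 h⟫ := by
  simp only [inner_toL2, schwartzMul_apply, mul_left_comm, mul_assoc]

lemma laplacian_eq_sum_stdVec (f : 𝓢(EuclideanSpace ℝ (Fin n), ℝ)) :
    Δ f = ∑ i : Fin n, ∂_{stdVec i} (∂_{stdVec i} f) := by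
  simp [SchwartzMap.laplacian_eq_sum (EuclideanSpace.basisFun (Fin n) ℝ)]

lemma inner_toL2_laplacian (f : 𝓢(EuclideanSpace ℝ (Fin n), ℝ)) :
    ⟪toL2 f, toL2 (Δ f)⟫ = -gradNorm f ^ 2 := by
  simp only [laplacian_eq_sum_stdVec, map_sum, inner_sum, inner_toL2_lineDerivOp_right f,
    gradNorm_sq, real_inner_self_eq_norm_sq, Finset.sum_neg_distrib]

/-- The transport term `(u · ∇) f` of a vector field `u` and a function `f`. -/
def advect (u : Fin n → 𝓢(EuclideanSpace ℝ (Fin n), ℝ)) (f : 𝓢(EuclideanSpace ℝ (Fin n), ℝ)) :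
    𝓢(EuclideanSpace ℝ (Fin n), ℝ) :=
  ∑ i, schwartzMul (u i) (∂_{stdVec i} f)

/-- A vector field of Schwartz functions is divergence free. -/
def IsDivFree (u : Fin n → 𝓢(EuclideanSpace ℝ (Fin n), ℝ)) : Prop :=
  ∑ i, ∂_{stdVec i} (u i) = 0

variable {u : Fin n → 𝓢(EuclideanSpace ℝ (Fin n), ℝ)}

lemma IsDivFree.advect_eq (hu : IsDivFree u) (f : 𝓢(EuclideanSpace ℝ (Fin n), ℝ)) :
    advect u f = ∑ i, ∂_{stdVec i} (schwartzMul (u i) f) := by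
  simp only [lineDerivOp_schwartzMul, Finset.sum_add_distrib]
  rw [advect, left_eq_add]
  ext x
  have hdiv := DFunLike.congr_fun hu x
  simp only [sum_apply, schwartzMul_apply, ← Finset.sum_mul, zero_apply] at hdiv ⊢
  rw [hdiv, zero_mul]

lemma IsDivFree.inner_toL2_advect_self (hu : IsDivFree u)
    (f : 𝓢(EuclideanSpace ℝ (Fin n), ℝ)) : ⟪toL2 f, toL2 (advect u f)⟫ = 0 := by
  have hskew : ⟪toL2 f, toL2 (advect u f)⟫ = -⟪toL2 (advect u f), toL2 f⟫ := by
    conv_rhs => rw [hu.advect_eq]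
    simp only [advect, map_sum, inner_sum, sum_inner, inner_toL2_schwartzMul_right f,
      inner_toL2_lineDerivOp_right, Finset.sum_neg_distrib]
  rw [real_inner_comm] at hskew
  linarith [real_inner_comm (toL2 f) (toL2 (advect u f))]

lemma IsDivFree.sum_inner_toL2_gradient (hu : IsDivFree u)
    (p : 𝓢(EuclideanSpace ℝ (Fin n), ℝ)) : ∑ j, ⟪toL2 (u j), toL2 (∂_{stdVec j} p)⟫ = 0 := by
  simp only [inner_toL2_lineDerivOp_right, Finset.sum_neg_distrib]
  rw [← sum_inner, ← map_sum, hu, map_zero, inner_zero_left, neg_zero]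

/-- The time derivative `Δu - (u · ∇)u - ∇p` prescribed by the momentum equation. -/
def momentumRhs (u : Fin n → 𝓢(EuclideanSpace ℝ (Fin n), ℝ))
    (p : 𝓢(EuclideanSpace ℝ (Fin n), ℝ)) (j : Fin n) : 𝓢(EuclideanSpace ℝ (Fin n), ℝ) :=
  Δ (u j) - advect u (u j) - ∂_{stdVec j} p

lemma IsDivFree.sum_inner_toL2_momentumRhs (hu : IsDivFree u)
    (p : 𝓢(EuclideanSpace ℝ (Fin n), ℝ)) :
    ∑ j, ⟪toL2 (u j), toL2 (momentumRhs u p j)⟫ = -vecGradNorm u ^ 2 := by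
  simp only [momentumRhs, map_sub, inner_sub_right, inner_toL2_laplacian,
    hu.inner_toL2_advect_self, Finset.sum_sub_distrib, hu.sum_inner_toL2_gradient, sub_zero,
    Finset.sum_neg_distrib, vecGradNorm_sq]

end Energy

/-! ### Vorticity -/

section Vorticity

lemma pd_eq_lineDerivOp (i : Fin 3) (f : 𝓢(E3, ℝ)) : pd i f = ⇑(∂_{stdVec i} f : 𝓢(E3, ℝ)) := rfl

/-- The vorticity `curl u`, as a field of Schwartz functions. -/
def vort (u : Fin 3 → 𝓢(E3, ℝ)) : Fin 3 → 𝓢(E3, ℝ) :=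
  ![∂_{(stdVec 1 : E3)} (u 2) - ∂_{(stdVec 2 : E3)} (u 1),
    ∂_{(stdVec 2 : E3)} (u 0) - ∂_{(stdVec 0 : E3)} (u 2),
    ∂_{(stdVec 0 : E3)} (u 1) - ∂_{(stdVec 1 : E3)} (u 0)]

lemma curlS_eq_vort (u : Fin 3 → 𝓢(E3, ℝ)) (i : Fin 3) : curlS u i = vort u i := by
  fin_cases i <;> rfl

lemma vortexStretch_eq (u : Fin 3 → 𝓢(E3, ℝ)) :
    vortexStretch u =
      ∑ k, ∑ i, ∫ x, vort u i x * (∂_{stdVec i} (u k) : 𝓢(E3, ℝ)) x * vort u k x := by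
  have hint (k i : Fin 3) :=
    integrable_mul_mul (vort u i) (∂_{stdVec i} (u k) : 𝓢(E3, ℝ)) (vort u k)
  simp only [vortexStretch, curlS_eq_vort, pd_eq_lineDerivOp, Finset.sum_mul]
  rw [integral_finsetSum _ fun k _ => integrable_finsetSum _ fun i _ => hint k i]
  exact Finset.sum_congr rfl fun k _ => integral_finsetSum _ fun i _ => hint k i

variable {u : Fin 3 → 𝓢(E3, ℝ)}

lemma IsDivFree.vort_momentumRhs (hu : IsDivFree u) (p : 𝓢(E3, ℝ)) (k : Fin 3) :
    vort (momentumRhs u p) k = Δ (vort u k) - advect u (vort u k) + advect (vort u) (u k) := by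
  ext x
  have hdiv : vort u k x * ∑ i, (∂_{stdVec i} (u i) : 𝓢(E3, ℝ)) x = 0 := by
    rw [← sum_apply, hu, zero_apply, mul_zero]
  have h10 := lineDerivOp_comm (F := ℝ) (stdVec (1 : Fin 3)) (stdVec 0)
  have h20 := lineDerivOp_comm (F := ℝ) (stdVec (2 : Fin 3)) (stdVec 0)
  have h21 := lineDerivOp_comm (F := ℝ) (stdVec (2 : Fin 3)) (stdVec 1)
  fin_cases k <;>
    simp only [vort, momentumRhs, laplacian_eq_sum_stdVec, Fin.sum_univ_three, advect,
      lineDerivOp_sub, LineDeriv.lineDerivOp_add, lineDerivOp_schwartzMul, h10, h20, h21,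
      Fin.zero_eta, Fin.mk_one, Fin.reduceFinMk, Matrix.cons_val, sub_apply, add_apply,
      schwartzMul_apply] at hdiv ⊢ <;>
    linear_combination -hdiv

lemma IsDivFree.sum_inner_toL2_vort_momentumRhs (hu : IsDivFree u) (p : 𝓢(E3, ℝ)) :
    ∑ k, ⟪toL2 (vort u k), toL2 (vort (momentumRhs u p) k)⟫ =
      vortexStretch u - vecGradNorm (vort u) ^ 2 := by
  have hstretch (k : Fin 3) : ⟪toL2 (vort u k), toL2 (advect (vort u) (u k))⟫ =
      ∑ i, ∫ x, vort u i x * (∂_{stdVec i} (u k) : 𝓢(E3, ℝ)) x * vort u k x := by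
    simp only [advect, map_sum, inner_sum, inner_toL2, schwartzMul_apply, mul_comm]
  simp only [hu.vort_momentumRhs, map_add, map_sub, inner_add_right, inner_sub_right,
    inner_toL2_laplacian, hu.inner_toL2_advect_self, sub_zero, hstretch, Finset.sum_add_distrib,
    Finset.sum_neg_distrib, vortexStretch_eq, vecGradNorm_sq]
  ring

lemma inner_toL2_lineDerivOp_swap {n : ℕ} (f g : 𝓢(EuclideanSpace ℝ (Fin n), ℝ))
    (v w : EuclideanSpace ℝ (Fin n)) :
    ⟪toL2 (∂_{v} f), toL2 (∂_{w} g)⟫ = ⟪toL2 (∂_{w} f), toL2 (∂_{v} g)⟫ := by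
  rw [inner_toL2_lineDerivOp_right, lineDerivOp_comm, ← inner_toL2_lineDerivOp_right]

lemma IsDivFree.vecGradNorm_eq (hu : IsDivFree u) : vecGradNorm u = vecNorm (vort u) := by
  rw [← sq_eq_sq₀ (vecGradNorm_nonneg u) (vecNorm_nonneg _), vecGradNorm_sq, vecNorm_sq]
  have hdiv : ‖toL2 (∑ i, ∂_{stdVec i} (u i))‖ ^ 2 = 0 := by rw [hu]; simp
  have h01 := inner_toL2_lineDerivOp_swap (u 1) (u 0) (stdVec 0) (stdVec 1)
  have h02 := inner_toL2_lineDerivOp_swap (u 2) (u 0) (stdVec 0) (stdVec 2)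
  have h12 := inner_toL2_lineDerivOp_swap (u 2) (u 1) (stdVec 1) (stdVec 2)
  simp only [Fin.sum_univ_three, vort, Matrix.cons_val, map_sub, map_add, gradNorm_sq,
    norm_sub_sq_real, norm_add_sq_real, inner_add_left] at hdiv ⊢
  simp only [real_inner_comm] at *
  linarith

end Vorticity

/-! ### The vortex-stretching estimate -/

section Complexification

variable {V : Type*} [NormedAddCommGroup V] [NormedSpace ℝ V]

/-- A real Schwartz function regarded as a complex one, to which the Fourier analysis applies. -/
def complexify : 𝓢(V, ℝ) →L[ℝ] 𝓢(V, ℂ) := SchwartzMap.postcompCLM Complex.ofRealCLM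

lemma complexify_apply (f : 𝓢(V, ℝ)) (x : V) : complexify f x = (f x : ℂ) := rfl

lemma lineDerivOp_complexify (v : V) (f : 𝓢(V, ℝ)) :
    ∂_{v} (complexify f) = complexify (∂_{v} f) := by
  ext x
  have hfun : ⇑(complexify f) = ⇑Complex.ofRealCLM ∘ ⇑f := rfl
  rw [complexify_apply, SchwartzMap.lineDerivOp_apply_eq_fderiv,
    SchwartzMap.lineDerivOp_apply_eq_fderiv, hfun,
    (Complex.ofRealCLM.hasFDerivAt.comp x (f.hasFDerivAt x)).fderiv]
  rfl

lemma norm_toL2_complexify [MeasureSpace V] [BorelSpace V] [SecondCountableTopology V]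
    [(volume : Measure V).HasTemperateGrowth] (f : 𝓢(V, ℝ)) : ‖toL2 (complexify f)‖ = ‖toL2 f‖ := by
  simp only [norm_toL2_eq_sqrt, complexify_apply, Complex.norm_real]

lemma gradNorm_complexify {n : ℕ} (f : 𝓢(EuclideanSpace ℝ (Fin n), ℝ)) :
    gradNorm (complexify f) = gradNorm f := by
  simp only [gradNorm, vecNorm, lineDerivOp_complexify, norm_toL2_complexify]

end Complexification

section Stretching

/-- At the frequency `Λ = A ^ (1 / (2 - α))` the low- and high-frequency contributions to the
trilinear estimate balance. -/
lemma exists_balanced_frequency {α A : ℝ} (hα : α ≠ 2) (hA : 0 ≤ A) :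
    ∃ Λ > 0, A * Λ ^ α ≤ A ^ (2 / (2 - α)) ∧ A * Λ ^ (α - 1) ≤ A ^ (1 / (2 - α)) := by
  obtain rfl | hA := hA.eq_or_lt
  · exact ⟨1, one_pos, by simpa using Real.rpow_nonneg le_rfl _,
      by simpa using Real.rpow_nonneg le_rfl _⟩
  have hα2 : 2 - α ≠ 0 := sub_ne_zero.2 hα.symm
  have hpow (r : ℝ) : A * (A ^ (1 / (2 - α))) ^ r = A ^ (1 + 1 / (2 - α) * r) := by
    rw [← Real.rpow_mul hA.le, Real.rpow_add hA, Real.rpow_one]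
  refine ⟨A ^ (1 / (2 - α)), by positivity, (hpow _).le.trans_eq ?_, (hpow _).le.trans_eq ?_⟩ <;>
  · congr 1
    field

variable {χ : E3 → ℝ} {α : ℝ} {u : Fin 3 → 𝓢(E3, ℝ)} {A : ℝ≥0}

lemma besovNorm_complexify_vort_le (χ : E3 → ℝ) (s : ℝ) (u : Fin 3 → 𝓢(E3, ℝ)) (i : Fin 3) :
    besovNorm χ s ⊤ ⊤ (complexify (vort u i)) ≤ vecBesovInf χ s (curlS u) := by
  have hcurl : (fun x => ((curlS u i x : ℝ) : ℂ)) = complexify (vort u i) := by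
    rw [curlS_eq_vort]
    rfl
  rw [besovNorm, lqNorm, if_pos rfl, ← hcurl]
  exact le_iSup (fun i => ⨆ j : ℤ, (2 : ℝ≥0∞) ^ ((j : ℝ) * s) *
    eLpNorm (Dproj χ j fun x => ((curlS u i x : ℝ) : ℂ)) ⊤ volume) i

lemma IsDivFree.integral_vort_mul_mul_vort_le (hu : IsDivFree u) (hχ : IsLPCutoff χ) (hα : 0 < α)
    (hα1 : α < 1) (hA : vecBesovInf χ (-α) (curlS u) ≤ A) {Λ : ℝ} (hΛ : 0 < Λ) (i k : Fin 3) :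
    ∫ x, vort u i x * (∂_{stdVec i} (u k) : 𝓢(E3, ℝ)) x * vort u k x ≤
      trilinearConst α * (A * Λ ^ α * vecNorm (vort u) ^ 2 +
        A * Λ ^ (α - 1) * (2 * vecNorm (vort u) * vecGradNorm (vort u))) := by
  have h := norm_integral_mul_mul_le_of_besovNorm_le (complexify (∂_{stdVec i} (u k))) hχ hα hα1
    ((besovNorm_complexify_vort_le χ (-α) u i).trans hA)
    ((besovNorm_complexify_vort_le χ (-α) u k).trans hA) hΛ
  simp only [complexify_apply, ← Complex.ofReal_mul, integral_complex_ofReal, Complex.norm_real,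
    norm_toL2_complexify, gradNorm_complexify] at h
  have hm := (norm_toL2_lineDerivOp_le_vecGradNorm u i k).trans_eq hu.vecGradNorm_eq
  have hk := norm_toL2_le_vecNorm (vort u) k
  have hgrad := add_le_add (gradNorm_le_vecGradNorm (vort u) i) (gradNorm_le_vecGradNorm (vort u) k)
  have := trilinearConst_pos hα hα1
  have := vecNorm_nonneg (vort u)
  have := gradNorm_nonneg (vort u i)
  have := gradNorm_nonneg (vort u k)
  calc _ ≤ _ := (le_abs_self _).trans h
    _ ≤ trilinearConst α * A * (Λ ^ α * (vecNorm (vort u) * vecNorm (vort u)) +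
        Λ ^ (α - 1) * (vecNorm (vort u) * (vecGradNorm (vort u) + vecGradNorm (vort u)))) := by
      gcongr
    _ = _ := by ring

/-- The constant of the vortex-stretching estimate: nine trilinear integrals, with the part
containing `∇ω` absorbed into `‖∇ω‖²` by Young's inequality. -/
def stretchConst (α : ℝ) : ℝ := 9 * trilinearConst α + (9 * trilinearConst α) ^ 2

lemma stretchConst_pos (hα : 0 < α) (hα1 : α < 1) : 0 < stretchConst α := by
  have := trilinearConst_pos hα hα1
  rw [stretchConst]
  positivity

lemma IsDivFree.vortexStretch_le (hu : IsDivFree u) (hχ : IsLPCutoff χ) (hα : 0 < α)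
    (hα1 : α < 1) (hA : vecBesovInf χ (-α) (curlS u) ≤ A) :
    vortexStretch u ≤ vecGradNorm (vort u) ^ 2 +
      stretchConst α * (A : ℝ) ^ (2 / (2 - α)) * vecNorm (vort u) ^ 2 := by
  obtain ⟨Λ, hΛ, hlow, hhigh⟩ := exists_balanced_frequency (by linarith : α ≠ 2) A.coe_nonneg
  have hsq : (A : ℝ) ^ (2 / (2 - α)) = ((A : ℝ) ^ (1 / (2 - α))) ^ 2 := by
    rw [← Real.rpow_mul_natCast A.coe_nonneg, Nat.cast_ofNat, div_mul_eq_mul_div, one_mul]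
  have hK := trilinearConst_pos hα hα1
  have hvort := vecNorm_nonneg (vort u)
  have hgrad := vecGradNorm_nonneg (vort u)
  rw [hsq] at hlow ⊢
  set L := (A : ℝ) ^ (1 / (2 - α))
  calc vortexStretch u
      ≤ ∑ _k : Fin 3, ∑ _i : Fin 3, trilinearConst α * (A * Λ ^ α * vecNorm (vort u) ^ 2 +
          A * Λ ^ (α - 1) * (2 * vecNorm (vort u) * vecGradNorm (vort u))) := by
        rw [vortexStretch_eq]
        gcongr with k _ i _
        exact hu.integral_vort_mul_mul_vort_le hχ hα hα1 hA hΛ i k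
    _ ≤ ∑ _k : Fin 3, ∑ _i : Fin 3, trilinearConst α * (L ^ 2 * vecNorm (vort u) ^ 2 +
          L * (2 * vecNorm (vort u) * vecGradNorm (vort u))) := by
        gcongr
    _ = 9 * trilinearConst α * L ^ 2 * vecNorm (vort u) ^ 2 +
          2 * (9 * trilinearConst α * L * vecNorm (vort u)) * vecGradNorm (vort u) := by
        simp only [Fin.sum_univ_three]
        ring
    _ ≤ 9 * trilinearConst α * L ^ 2 * vecNorm (vort u) ^ 2 +
          ((9 * trilinearConst α * L * vecNorm (vort u)) ^ 2 + vecGradNorm (vort u) ^ 2) := by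
        gcongr
        exact two_mul_le_add_sq _ _
    _ = _ := by
        rw [stretchConst]
        ring

end Stretching

/-! ### Smooth families of Schwartz functions -/

section Seminorms

variable {V F : Type*} [NormedAddCommGroup V] [NormedSpace ℝ V]
  [NormedAddCommGroup F] [NormedSpace ℝ F]

lemma seminorm_lineDerivOp_le (k l : ℕ) (v : V) (f : 𝓢(V, F)) :
    SchwartzMap.seminorm ℝ k l (∂_{v} f) ≤ ‖v‖ * SchwartzMap.seminorm ℝ k (l + 1) f := by
  refine SchwartzMap.seminorm_le_bound ℝ k l _ (by positivity) fun x => ?_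
  have hfun : ⇑(∂_{v} f : 𝓢(V, F)) = ⇑(ContinuousLinearMap.apply ℝ F v) ∘ fderiv ℝ f := rfl
  have hf : ContDiff ℝ l (fderiv ℝ f) := (f.smooth (l + 1 : ℕ)).fderiv_right (by simp)
  have happly : ‖ContinuousLinearMap.apply ℝ F v‖ ≤ ‖v‖ :=
    ContinuousLinearMap.opNorm_le_bound _ (norm_nonneg v) fun L => by
      rw [mul_comm]
      exact L.le_opNorm v
  have hiter : ‖iteratedFDeriv ℝ l ⇑(∂_{v} f : 𝓢(V, F)) x‖ ≤
      ‖v‖ * ‖iteratedFDeriv ℝ (l + 1) f x‖ := by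
    rw [hfun, ← norm_iteratedFDeriv_fderiv]
    exact ((ContinuousLinearMap.apply ℝ F v).norm_iteratedFDeriv_comp_left hf.contDiffAt
      le_rfl).trans (by gcongr)
  calc ‖x‖ ^ k * ‖iteratedFDeriv ℝ l ⇑(∂_{v} f : 𝓢(V, F)) x‖
      ≤ ‖v‖ * (‖x‖ ^ k * ‖iteratedFDeriv ℝ (l + 1) f x‖) := by
        rw [mul_left_comm]
        gcongr
    _ ≤ ‖v‖ * SchwartzMap.seminorm ℝ k (l + 1) f := by
        gcongr
        exact SchwartzMap.le_seminorm ℝ k (l + 1) f x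

lemma seminorm_schwartzMul_le (k l : ℕ) (f g : 𝓢(V, ℝ)) :
    SchwartzMap.seminorm ℝ k l (schwartzMul f g) ≤ ∑ i ∈ Finset.range (l + 1),
      l.choose i * SchwartzMap.seminorm ℝ 0 i f * SchwartzMap.seminorm ℝ k (l - i) g := by
  refine SchwartzMap.seminorm_le_bound ℝ k l _ (by positivity) fun x => ?_
  have hfun : ⇑(schwartzMul f g) = fun y => f y * g y := rfl
  calc ‖x‖ ^ k * ‖iteratedFDeriv ℝ l (schwartzMul f g) x‖
      ≤ ‖x‖ ^ k * ∑ i ∈ Finset.range (l + 1), l.choose i * ‖iteratedFDeriv ℝ i f x‖ *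
          ‖iteratedFDeriv ℝ (l - i) g x‖ := by
        rw [hfun]
        gcongr
        exact norm_iteratedFDeriv_mul_le (f.smooth l) (g.smooth l) x le_rfl
    _ = ∑ i ∈ Finset.range (l + 1), l.choose i * (‖x‖ ^ 0 * ‖iteratedFDeriv ℝ i f x‖) *
          (‖x‖ ^ k * ‖iteratedFDeriv ℝ (l - i) g x‖) := by
        rw [Finset.mul_sum]
        exact Finset.sum_congr rfl fun i _ => by ring
    _ ≤ _ := by
        gcongr <;> exact SchwartzMap.le_seminorm ℝ _ _ _ x

lemma norm_apply_le_mul_one_add_rpow_neg (f : 𝓢(V, F)) (r : ℕ) (x : V) :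
    ‖f x‖ ≤ 2 ^ (r - 1) * (SchwartzMap.seminorm ℝ 0 0 f + SchwartzMap.seminorm ℝ r 0 f) *
      (1 + ‖x‖) ^ (-(r : ℝ)) := by
  rw [Real.rpow_neg (by positivity), Real.rpow_natCast, ← div_eq_mul_inv,
    le_div_iff₀ (by positivity)]
  calc ‖f x‖ * (1 + ‖x‖) ^ r ≤ ‖f x‖ * (2 ^ (r - 1) * (1 ^ r + ‖x‖ ^ r)) := by
        gcongr
        exact add_pow_le zero_le_one (norm_nonneg x) r
    _ = 2 ^ (r - 1) * (‖f x‖ + ‖x‖ ^ r * ‖f x‖) := by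
        rw [one_pow]
        ring
    _ ≤ _ := by
        gcongr
        · exact SchwartzMap.norm_le_seminorm ℝ f x
        · exact SchwartzMap.norm_pow_mul_le_seminorm ℝ f r x

end Seminorms

/-- A time-dependent Schwartz function that is jointly smooth on `I × V` and whose Schwartz
seminorms are all locally bounded in time. -/
structure IsSmoothFamily {V F : Type*} [NormedAddCommGroup V] [NormedSpace ℝ V]
    [NormedAddCommGroup F] [NormedSpace ℝ F] (I : Set ℝ) (w : ℝ → 𝓢(V, F)) : Prop where
  contDiffOn : ContDiffOn ℝ (⊤ : ℕ∞) (fun tx : ℝ × V => w tx.1 tx.2) (I ×ˢ Set.univ)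
  locallyBounded : ∀ k l : ℕ, ∀ t ∈ I, ∃ M : ℝ,
    ∀ᶠ s in 𝓝[I] t, SchwartzMap.seminorm ℝ k l (w s) ≤ M

namespace IsSmoothFamily

variable {V F : Type*} [NormedAddCommGroup V] [NormedSpace ℝ V]
  [NormedAddCommGroup F] [NormedSpace ℝ F] {I : Set ℝ}

section Algebra

variable {w w' : ℝ → 𝓢(V, F)}

lemma add (hw : IsSmoothFamily I w) (hw' : IsSmoothFamily I w') :
    IsSmoothFamily I fun s => w s + w' s where
  contDiffOn := hw.contDiffOn.add hw'.contDiffOn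
  locallyBounded k l t ht := by
    obtain ⟨M, hM⟩ := hw.locallyBounded k l t ht
    obtain ⟨M', hM'⟩ := hw'.locallyBounded k l t ht
    refine ⟨M + M', ?_⟩
    filter_upwards [hM, hM'] with s hs hs'
    exact (map_add_le_add _ _ _).trans (add_le_add hs hs')

lemma neg (hw : IsSmoothFamily I w) : IsSmoothFamily I fun s => -w s where
  contDiffOn := hw.contDiffOn.neg
  locallyBounded := by simpa only [map_neg_eq_map] using hw.locallyBounded

lemma sub (hw : IsSmoothFamily I w) (hw' : IsSmoothFamily I w') :
    IsSmoothFamily I fun s => w s - w' s := by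
  simpa only [sub_eq_add_neg] using hw.add hw'.neg

lemma sum {ι : Type*} (J : Finset ι) {w : ι → ℝ → 𝓢(V, F)} (hw : ∀ i, IsSmoothFamily I (w i)) :
    IsSmoothFamily I fun s => ∑ i ∈ J, w i s := by
  classical
  induction J using Finset.induction_on with
  | empty => exact ⟨by simpa using contDiffOn_const, fun _ _ _ _ => ⟨0, by simp⟩⟩
  | insert i J hi ih => simpa only [Finset.sum_insert hi] using (hw i).add ih

lemma schwartzMul {w w' : ℝ → 𝓢(V, ℝ)} (hw : IsSmoothFamily I w) (hw' : IsSmoothFamily I w') :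
    IsSmoothFamily I fun s => schwartzMul (w s) (w' s) where
  contDiffOn := hw.contDiffOn.mul hw'.contDiffOn
  locallyBounded k l t ht := by
    choose M hM using fun i => hw.locallyBounded 0 i t ht
    choose M' hM' using fun i => hw'.locallyBounded k i t ht
    refine ⟨∑ i ∈ Finset.range (l + 1), l.choose i * M i * M' (l - i), ?_⟩
    filter_upwards [(Finset.range (l + 1)).eventually_all.2 fun i _ => hM i,
      (Finset.range (l + 1)).eventually_all.2 fun i _ => hM' (l - i)] with s hs hs'
    refine (seminorm_schwartzMul_le k l (w s) (w' s)).trans (Finset.sum_le_sum fun i hi => ?_)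
    have := (apply_nonneg _ _).trans (hs i hi)
    gcongr
    exacts [hs i hi, hs' i hi]

lemma lineDerivOp_eq_fderivWithin (hw : IsSmoothFamily I w) (v : V) {t : ℝ} (ht : t ∈ I) (x : V) :
    (∂_{v} (w t) : 𝓢(V, F)) x =
      fderivWithin ℝ (fun tx : ℝ × V => w tx.1 tx.2) (I ×ˢ Set.univ) (t, x) (0, v) := by
  have hjoint := (hw.contDiffOn.differentiableOn (by simp) (t, x)
    ⟨ht, Set.mem_univ x⟩).hasFDerivWithinAt
  have hslice : HasFDerivWithinAt (fun y : V => (t, y)) (ContinuousLinearMap.inr ℝ ℝ V)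
      Set.univ x := (hasFDerivAt_prodMk_right t x).hasFDerivWithinAt
  rw [SchwartzMap.lineDerivOp_apply_eq_fderiv]
  exact DFunLike.congr_fun
    (hjoint.comp x hslice fun y _ => ⟨ht, Set.mem_univ y⟩).hasFDerivAt_of_univ.fderiv v

lemma lineDerivOp (hw : IsSmoothFamily I w) (hI : UniqueDiffOn ℝ I) (v : V) :
    IsSmoothFamily I fun s => (∂_{v} (w s) : 𝓢(V, F)) where
  contDiffOn := ((hw.contDiffOn.fderivWithin (hI.prod uniqueDiffOn_univ) (m := (⊤ : ℕ∞))
    (by simp)).clm_apply (contDiffOn_const (c := ((0, v) : ℝ × V)))).congr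
      fun tx htx => hw.lineDerivOp_eq_fderivWithin v htx.1 tx.2
  locallyBounded k l t ht := by
    obtain ⟨M, hM⟩ := hw.locallyBounded k (l + 1) t ht
    refine ⟨‖v‖ * M, ?_⟩
    filter_upwards [hM] with s hs
    exact (seminorm_lineDerivOp_le k l v (w s)).trans (by gcongr)

end Algebra

section FluidOperators

variable {n : ℕ} {u : ℝ → Fin n → 𝓢(EuclideanSpace ℝ (Fin n), ℝ)}
  {f : ℝ → 𝓢(EuclideanSpace ℝ (Fin n), ℝ)}

lemma laplacian (hf : IsSmoothFamily I f) (hI : UniqueDiffOn ℝ I) :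
    IsSmoothFamily I fun s => Δ (f s) := by
  simp only [laplacian_eq_sum_stdVec]
  exact sum _ fun i => (hf.lineDerivOp hI _).lineDerivOp hI _

lemma advect (hu : ∀ j, IsSmoothFamily I fun s => u s j) (hf : IsSmoothFamily I f)
    (hI : UniqueDiffOn ℝ I) : IsSmoothFamily I fun s => advect (u s) (f s) :=
  sum _ fun i => (hu i).schwartzMul (hf.lineDerivOp hI _)

lemma momentumRhs (hu : ∀ j, IsSmoothFamily I fun s => u s j) (hf : IsSmoothFamily I f)
    (hI : UniqueDiffOn ℝ I) (j : Fin n) : IsSmoothFamily I fun s => momentumRhs (u s) (f s) j :=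
  (((hu j).laplacian hI).sub (advect hu (hu j) hI)).sub (hf.lineDerivOp hI _)

lemma vort {u : ℝ → Fin 3 → 𝓢(E3, ℝ)} (hu : ∀ j, IsSmoothFamily I fun s => u s j)
    (hI : UniqueDiffOn ℝ I) (k : Fin 3) : IsSmoothFamily I fun s => vort (u s) k := by
  have hd (i j : Fin 3) := (hu j).lineDerivOp hI (stdVec i)
  fin_cases k
  exacts [(hd 1 2).sub (hd 2 1), (hd 2 0).sub (hd 0 2), (hd 0 1).sub (hd 1 0)]

end FluidOperators

section Integral

variable {w : ℝ → 𝓢(V, F)}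

lemma exists_eventually_norm_le (hw : IsSmoothFamily I w) (r : ℕ) {t : ℝ} (ht : t ∈ I) :
    ∃ M : ℝ, ∀ᶠ s in 𝓝[I] t, ∀ x, ‖w s x‖ ≤ M * (1 + ‖x‖) ^ (-(r : ℝ)) := by
  obtain ⟨M₀, hM₀⟩ := hw.locallyBounded 0 0 t ht
  obtain ⟨M, hM⟩ := hw.locallyBounded r 0 t ht
  refine ⟨2 ^ (r - 1) * (M₀ + M), ?_⟩
  filter_upwards [hM₀, hM] with s hs₀ hs x
  exact (norm_apply_le_mul_one_add_rpow_neg (w s) r x).trans (by gcongr)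

variable [MeasurableSpace V] [BorelSpace V] [SecondCountableTopology V] (μ : Measure V)
  [μ.HasTemperateGrowth]

lemma continuousOn_integral (hw : IsSmoothFamily I w) :
    ContinuousOn (fun s => ∫ x, w s x ∂μ) I := by
  intro t ht
  obtain ⟨M, hM⟩ := hw.exists_eventually_norm_le μ.integrablePower ht
  refine continuousWithinAt_of_dominated (Eventually.of_forall fun s => by fun_prop)
    (hM.mono fun s hs => ae_of_all _ hs)
    ((Measure.integrable_pow_neg_integrablePower μ).const_mul M) (ae_of_all _ fun x => ?_)
  exact (hw.contDiffOn.continuousOn.comp (f := fun s : ℝ => (s, x)) (by fun_prop)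
    fun s hs => ⟨hs, Set.mem_univ x⟩) t ht

end Integral

end IsSmoothFamily

lemma hasDerivAt_fderiv_prodMk {V F : Type*} [NormedAddCommGroup V] [NormedSpace ℝ V]
    [NormedAddCommGroup F] [NormedSpace ℝ F] {W : ℝ × V → F} {t : ℝ} {x : V}
    (hW : ContDiffAt ℝ 2 W (t, x)) (v : V) :
    HasDerivAt (fun s => fderiv ℝ W (s, x) (0, v))
      (fderiv ℝ (fun y => fderiv ℝ W (t, y) (1, 0)) x v) t := by
  have hsnd : HasFDerivAt (fderiv ℝ W) (fderiv ℝ (fderiv ℝ W) (t, x)) (t, x) :=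
    ((hW.fderiv_right (m := 1) le_rfl).differentiableAt (by simp)).hasFDerivAt
  have htime : HasDerivAt (fun s => fderiv ℝ W (s, x)) (fderiv ℝ (fderiv ℝ W) (t, x) (1, 0)) t :=
    HasFDerivAt.comp_hasDerivAt (f := fun s : ℝ => (s, x)) t hsnd
      ((hasDerivAt_id t).prodMk (hasDerivAt_const t x))
  have hspace : HasFDerivAt (fun y => fderiv ℝ W (t, y))
      (fderiv ℝ (fderiv ℝ W) (t, x) ∘L ContinuousLinearMap.inr ℝ ℝ V) x :=
    HasFDerivAt.comp (f := fun y : V => (t, y)) x hsnd (hasFDerivAt_prodMk_right t x)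
  rw [(hspace.clm_apply (hasFDerivAt_const ((1 : ℝ), (0 : V)) x)).fderiv]
  refine (htime.clm_apply (hasDerivAt_const t ((0 : ℝ), v))).congr_deriv ?_
  simpa using hW.isSymmSndFDerivAt (by simp) (1, 0) (0, v)

/-- The Schwartz functions `g t` are the pointwise time derivatives of `w` in the interior
of `I`. -/
def HasTimeDerivOn {V F : Type*} [NormedAddCommGroup V] [NormedSpace ℝ V]
    [NormedAddCommGroup F] [NormedSpace ℝ F] (I : Set ℝ) (w g : ℝ → 𝓢(V, F)) : Prop :=
  ∀ t ∈ interior I, ∀ x, HasDerivAt (fun s => w s x) (g t x) t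

namespace HasTimeDerivOn

variable {V F : Type*} [NormedAddCommGroup V] [NormedSpace ℝ V]
  [NormedAddCommGroup F] [NormedSpace ℝ F] {I : Set ℝ} {w w' g g' : ℝ → 𝓢(V, F)}

lemma sub (hw : HasTimeDerivOn I w g) (hw' : HasTimeDerivOn I w' g') :
    HasTimeDerivOn I (fun s => w s - w' s) fun s => g s - g' s :=
  fun t ht x => (hw t ht x).sub (hw' t ht x)

lemma schwartzMul {w w' g g' : ℝ → 𝓢(V, ℝ)} (hw : HasTimeDerivOn I w g)
    (hw' : HasTimeDerivOn I w' g') : HasTimeDerivOn I (fun s => schwartzMul (w s) (w' s))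
      fun s => schwartzMul (g s) (w' s) + schwartzMul (w s) (g' s) :=
  fun t ht x => (hw t ht x).mul (hw' t ht x)

lemma lineDerivOp (hd : HasTimeDerivOn I w g) (hw : IsSmoothFamily I w) (v : V) :
    HasTimeDerivOn I (fun s => (∂_{v} (w s) : 𝓢(V, F))) fun s => ∂_{v} (g s) := by
  intro t ht x
  set W : ℝ × V → F := fun tx => w tx.1 tx.2
  have hnhds (s) (hs : s ∈ interior I) (y : V) : I ×ˢ Set.univ ∈ 𝓝 (s, y) :=
    prod_mem_nhds (mem_interior_iff_mem_nhds.1 hs) univ_mem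
  have hsmooth (y : V) : ContDiffAt ℝ 2 W (t, y) :=
    contDiffAt_infty.1 (hw.contDiffOn.contDiffAt (hnhds t ht y)) 2
  have hspace : ∀ᶠ s in 𝓝 t, (∂_{v} (w s) : 𝓢(V, F)) x = fderiv ℝ W (s, x) (0, v) := by
    filter_upwards [isOpen_interior.mem_nhds ht] with s hs
    rw [hw.lineDerivOp_eq_fderivWithin v (interior_subset hs),
      fderivWithin_of_mem_nhds (hnhds s hs x)]
  have htime : ⇑(g t) = fun y => fderiv ℝ W (t, y) (1, 0) := by
    ext y
    have hslice : HasDerivAt (fun s => w s y) (fderiv ℝ W (t, y) (1, 0)) t :=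
      HasFDerivAt.comp_hasDerivAt (f := fun s : ℝ => (s, y)) t
        ((hsmooth y).differentiableAt (by simp)).hasFDerivAt
        ((hasDerivAt_id t).prodMk (hasDerivAt_const t y))
    exact (hd t ht y).unique hslice
  rw [SchwartzMap.lineDerivOp_apply_eq_fderiv, htime]
  exact (hasDerivAt_fderiv_prodMk (hsmooth x) v).congr_of_eventuallyEq hspace

lemma vort {u g : ℝ → Fin 3 → 𝓢(E3, ℝ)}
    (hd : ∀ j, HasTimeDerivOn I (fun s => u s j) fun s => g s j)
    (hu : ∀ j, IsSmoothFamily I fun s => u s j) (k : Fin 3) :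
    HasTimeDerivOn I (fun s => vort (u s) k) fun s => vort (g s) k := by
  have hd' (i j : Fin 3) := (hd j).lineDerivOp (hu j) (stdVec i)
  fin_cases k
  exacts [(hd' 1 2).sub (hd' 2 1), (hd' 2 0).sub (hd' 0 2), (hd' 0 1).sub (hd' 1 0)]

lemma hasDerivAt_integral [MeasurableSpace V] [BorelSpace V] [SecondCountableTopology V]
    (μ : Measure V) [μ.HasTemperateGrowth] (hd : HasTimeDerivOn I w g) (hg : IsSmoothFamily I g)
    {t : ℝ} (ht : t ∈ interior I) : HasDerivAt (fun s => ∫ x, w s x ∂μ) (∫ x, g t x ∂μ) t := by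
  obtain ⟨M, hM⟩ := hg.exists_eventually_norm_le μ.integrablePower (interior_subset ht)
  rw [nhdsWithin_eq_nhds.2 (mem_interior_iff_mem_nhds.1 ht)] at hM
  have hnhds := hM.and (isOpen_interior.mem_nhds ht)
  exact (hasDerivAt_integral_of_dominated_loc_of_deriv_le hnhds
    (Eventually.of_forall fun s => by fun_prop) (w t).integrable (by fun_prop)
    (ae_of_all _ fun x s hs => hs.1 x) ((Measure.integrable_pow_neg_integrablePower μ).const_mul M)
    (ae_of_all _ fun x s hs => hd s hs.2 x)).2

end HasTimeDerivOn

section L2Evolution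

variable {V : Type*} [NormedAddCommGroup V] [NormedSpace ℝ V] [MeasureSpace V] [BorelSpace V]
  [SecondCountableTopology V] [(volume : Measure V).HasTemperateGrowth]
  {ι : Type*} [Fintype ι] {I : Set ℝ} {v g : ℝ → ι → 𝓢(V, ℝ)}

lemma norm_toL2_sq_eq_integral_schwartzMul (f : 𝓢(V, ℝ)) :
    ‖toL2 f‖ ^ 2 = ∫ x, schwartzMul f f x := by
  rw [← real_inner_self_eq_norm_sq, inner_toL2]
  rfl

lemma IsSmoothFamily.continuousOn_vecNorm_sq (hv : ∀ j, IsSmoothFamily I fun s => v s j) :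
    ContinuousOn (fun s => vecNorm (v s) ^ 2) I := by
  simp only [vecNorm_sq, norm_toL2_sq_eq_integral_schwartzMul]
  exact continuousOn_finsetSum _ fun j _ => ((hv j).schwartzMul (hv j)).continuousOn_integral _

lemma HasTimeDerivOn.hasDerivAt_vecNorm_sq
    (hd : ∀ j, HasTimeDerivOn I (fun s => v s j) fun s => g s j)
    (hv : ∀ j, IsSmoothFamily I fun s => v s j) (hg : ∀ j, IsSmoothFamily I fun s => g s j)
    {t : ℝ} (ht : t ∈ interior I) :
    HasDerivAt (fun s => vecNorm (v s) ^ 2) (2 * ∑ j, ⟪toL2 (v t j), toL2 (g t j)⟫) t := by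
  simp only [vecNorm_sq, norm_toL2_sq_eq_integral_schwartzMul, Finset.mul_sum]
  refine HasDerivAt.fun_sum fun j _ => (((hd j).schwartzMul (hd j)).hasDerivAt_integral volume
    (((hg j).schwartzMul (hv j)).add ((hv j).schwartzMul (hg j))) ht).congr_deriv ?_
  simp only [add_apply, schwartzMul_apply, mul_comm (g t j _), ← two_mul, integral_const_mul,
    inner_toL2]

end L2Evolution

/-! ### Grönwall's inequality -/

section Gronwall

variable {a b : ℝ} {φ : ℝ → ℝ≥0∞}

lemma sub_le_toReal_lintegral_of_hasDerivAt {g g' : ℝ → ℝ} (hab : a ≤ b)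
    (hg : ContinuousOn g (Set.Icc a b)) (hd : ∀ s ∈ Set.Ioo a b, HasDerivAt g (g' s) s)
    (hφ : ∫⁻ s in Set.Ioo a b, φ s ≠ ∞)
    (hle : ∀ s ∈ Set.Ioo a b, ENNReal.ofReal (g' s) ≤ φ s) :
    g b - g a ≤ (∫⁻ s in Set.Ioo a b, φ s).toReal := by
  -- `φ` and `g'` may fail to be measurable, but `deriv g` always is.
  set ψ : ℝ → ℝ := fun s => max (deriv g s) 0
  have hψm : AEStronglyMeasurable ψ (volume.restrict (Set.Ioo a b)) :=
    ((measurable_deriv g).max measurable_const).aestronglyMeasurable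
  have hψ0 : 0 ≤ ψ := fun s => le_max_right _ _
  have hψφ : ∫⁻ s in Set.Ioo a b, ENNReal.ofReal (ψ s) ≤ ∫⁻ s in Set.Ioo a b, φ s :=
    setLIntegral_mono' measurableSet_Ioo fun s hs => by
      simpa [ψ, (hd s hs).deriv, ENNReal.ofReal_max] using hle s hs
  have hψi : IntegrableOn ψ (Set.Ioo a b) :=
    ⟨hψm, (hasFiniteIntegral_iff_ofReal (ae_of_all _ hψ0)).2 (hψφ.trans_lt hφ.lt_top)⟩
  calc g b - g a ≤ ∫ s in a..b, ψ s :=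
        intervalIntegral.sub_le_integral_of_hasDeriv_right_of_le hab hg
          (fun s hs => (hd s hs).hasDerivWithinAt)
          ((integrableOn_Icc_iff_integrableOn_Ioo (f := ψ)).2 hψi)
          fun s hs => (hd s hs).deriv.ge.trans (le_max_left _ _)
    _ = (∫⁻ s in Set.Ioo a b, ENNReal.ofReal (ψ s)).toReal := by
        rw [intervalIntegral.integral_of_le hab, integral_Ioc_eq_integral_Ioo,
          integral_eq_lintegral_of_nonneg_ae (ae_of_all _ hψ0) hψm]
    _ ≤ (∫⁻ s in Set.Ioo a b, φ s).toReal := ENNReal.toReal_mono hφ hψφ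

lemma le_mul_exp_toReal_lintegral_of_hasDerivAt {E E' : ℝ → ℝ} (hab : a ≤ b) (hE0 : ∀ s, 0 ≤ E s)
    (hE : ContinuousOn E (Set.Icc a b)) (hd : ∀ s ∈ Set.Ioo a b, HasDerivAt E (E' s) s)
    (hφ : ∫⁻ s in Set.Ioo a b, φ s ≠ ∞)
    (hle : ∀ s ∈ Set.Ioo a b, φ s ≠ ∞ → E' s ≤ (φ s).toReal * E s) :
    E b ≤ E a * Real.exp (∫⁻ s in Set.Ioo a b, φ s).toReal := by
  set I := (∫⁻ s in Set.Ioo a b, φ s).toReal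
  -- `E` may vanish, so the logarithmic derivative is taken of `E + δ`.
  have hshift (δ : ℝ) (hδ : 0 < δ) : E b + δ ≤ (E a + δ) * Real.exp I := by
    have hpos (s) : 0 < E s + δ := add_pos_of_nonneg_of_pos (hE0 s) hδ
    have hlog : Real.log (E b + δ) - Real.log (E a + δ) ≤ I := by
      refine sub_le_toReal_lintegral_of_hasDerivAt (g := fun s => Real.log (E s + δ)) hab
        ((hE.add continuousOn_const).log fun s _ => (hpos s).ne')
        (fun s hs => ((hd s hs).add_const δ).log (hpos s).ne') hφ fun s hs => ?_
      rcases eq_or_ne (φ s) ∞ with htop | hfin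
      · exact htop ▸ le_top
      · refine ENNReal.ofReal_le_of_le_toReal ((div_le_iff₀ (hpos s)).2 ?_)
        exact (hle s hs hfin).trans (by gcongr; linarith)
    rwa [← Real.log_div (hpos b).ne' (hpos a).ne',
      Real.log_le_iff_le_exp (div_pos (hpos b) (hpos a)), div_le_iff₀' (hpos a)] at hlog
  refine le_of_forall_pos_le_add fun ε hε => ?_
  have hδ : 0 < ε / Real.exp I := by positivity
  calc E b ≤ E b + ε / Real.exp I := by linarith
    _ ≤ (E a + ε / Real.exp I) * Real.exp I := hshift _ hδ
    _ = E a * Real.exp I + ε := by rw [add_mul, div_mul_cancel₀ _ (Real.exp_pos I).ne']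

lemma le_mul_exp_mul_of_lintegral_le {E E' : ℝ → ℝ} {c : ℝ} {K : ℝ≥0} (hab : a ≤ b) (hc : 0 < c)
    (hE0 : ∀ s, 0 ≤ E s) (hE : ContinuousOn E (Set.Icc a b))
    (hd : ∀ s ∈ Set.Ioo a b, HasDerivAt E (E' s) s) (hφ : ∫⁻ s in Set.Ioo a b, φ s ≤ K)
    (hle : ∀ s ∈ Set.Ioo a b, φ s ≠ ∞ → E' s ≤ c * (φ s).toReal * E s) :
    E b ≤ E a * Real.exp (c * K) := by
  have hcφ : ∫⁻ s in Set.Ioo a b, ENNReal.ofReal c * φ s ≤ ENNReal.ofReal (c * K) := by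
    rw [lintegral_const_mul' _ _ ENNReal.ofReal_ne_top, ENNReal.ofReal_mul hc.le,
      ENNReal.ofReal_coe_nnreal]
    gcongr
  have hgronwall := le_mul_exp_toReal_lintegral_of_hasDerivAt hab hE0 hE hd
    (hcφ.trans_lt ENNReal.ofReal_lt_top).ne fun s hs hfin => by
      rw [ENNReal.toReal_mul, ENNReal.toReal_ofReal hc.le]
      exact hle s hs fun htop => hfin (by simp [htop, hc])
  refine hgronwall.trans ?_
  gcongr
  · exact hE0 a
  · exact ENNReal.toReal_le_of_le_ofReal (by positivity) hcφ

end Gronwall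

/-! ### Strong solutions -/

lemma vecL2_eq_ofReal_vecNorm (v : Fin 3 → 𝓢(E3, ℝ)) :
    vecL2 (fun i => ⇑(v i)) = ENNReal.ofReal (vecNorm v) := by
  rw [vecL2, vecNorm, Real.sqrt_eq_rpow,
    ← ENNReal.ofReal_rpow_of_nonneg (by positivity) (by norm_num),
    ENNReal.ofReal_sum_of_nonneg fun _ _ => sq_nonneg _]
  simp only [eLpNorm_two_eq_ofReal_norm_toL2, ENNReal.rpow_two, ENNReal.ofReal_pow (norm_nonneg _)]

lemma gradL2_eq_ofReal_vecGradNorm (v : Fin 3 → 𝓢(E3, ℝ)) :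
    gradL2 (fun i => ⇑(v i)) = ENNReal.ofReal (vecGradNorm v) := by
  rw [gradL2, vecGradNorm, Real.sqrt_eq_rpow,
    ← ENNReal.ofReal_rpow_of_nonneg (by positivity) (by norm_num), Finset.sum_comm,
    ENNReal.ofReal_sum_of_nonneg fun _ _ => sq_nonneg _]
  simp only [gradNorm_sq, ENNReal.ofReal_sum_of_nonneg fun _ _ => sq_nonneg _, pd_eq_lineDerivOp,
    eLpNorm_two_eq_ofReal_norm_toL2, ENNReal.rpow_two, ENNReal.ofReal_pow (norm_nonneg _)]

lemma vecL2_curlS_eq_ofReal_vecNorm_vort (u : Fin 3 → 𝓢(E3, ℝ)) :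
    vecL2 (curlS u) = ENNReal.ofReal (vecNorm (vort u)) := by
  rw [funext (curlS_eq_vort u), vecL2_eq_ofReal_vecNorm]

lemma IsDivFree.vortexStretch_sub_sq_vecGradNorm_le {u : Fin 3 → 𝓢(E3, ℝ)} {χ : E3 → ℝ} {α : ℝ}
    (hu : IsDivFree u) (hχ : IsLPCutoff χ) (hα : 0 < α) (hα1 : α < 1)
    (hfin : vecBesovInf χ (-α) (curlS u) ^ (2 / (2 - α)) ≠ ∞) :
    vortexStretch u - vecGradNorm (vort u) ^ 2 ≤ stretchConst α *
      (vecBesovInf χ (-α) (curlS u) ^ (2 / (2 - α))).toReal * vecNorm (vort u) ^ 2 := by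
  have hq : 0 < 2 / (2 - α) := div_pos two_pos (by linarith)
  have hN : vecBesovInf χ (-α) (curlS u) ≠ ∞ := fun htop =>
    hfin (by rw [htop, ENNReal.top_rpow_of_pos hq])
  rw [← ENNReal.toReal_rpow, sub_le_iff_le_add']
  exact hu.vortexStretch_le hχ hα hα1 (ENNReal.coe_toNNReal hN).ge

namespace IsStrongSolution

variable {T : ℝ} {u : ℝ → Fin 3 → 𝓢(E3, ℝ)} {p : ℝ → 𝓢(E3, ℝ)}

lemma isDivFree (h : IsStrongSolution T u p) {t : ℝ} (ht : t ∈ Set.Ico 0 T) :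
    IsDivFree (u t) := by
  ext x
  simpa [pd_eq_lineDerivOp] using h.divFree t ht x

lemma isSmoothFamily_velocity (h : IsStrongSolution T u p) (j : Fin 3) :
    IsSmoothFamily (Set.Ico 0 T) fun s => u s j where
  contDiffOn := h.smooth_u j
  locallyBounded k l t ht := by
    obtain ⟨ε, hε, M, hM⟩ := h.locBdd_u k l t ht
    refine ⟨M, ?_⟩
    filter_upwards [self_mem_nhdsWithin, mem_nhdsWithin_of_mem_nhds (Metric.ball_mem_nhds t hε)]
      with s hs hst using hM s hs hst j

lemma isSmoothFamily_pressure (h : IsStrongSolution T u p) :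
    IsSmoothFamily (Set.Ico 0 T) p where
  contDiffOn := h.smooth_p
  locallyBounded k l t ht := by
    obtain ⟨ε, hε, M, hM⟩ := h.locBdd_p k l t ht
    refine ⟨M, ?_⟩
    filter_upwards [self_mem_nhdsWithin, mem_nhdsWithin_of_mem_nhds (Metric.ball_mem_nhds t hε)]
      with s hs hst using hM s hs hst

lemma isSmoothFamily_momentumRhs (h : IsStrongSolution T u p) (j : Fin 3) :
    IsSmoothFamily (Set.Ico 0 T) fun s => momentumRhs (u s) (p s) j :=
  .momentumRhs h.isSmoothFamily_velocity h.isSmoothFamily_pressure (uniqueDiffOn_Ico 0 T) j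

lemma hasTimeDerivOn_velocity (h : IsStrongSolution T u p) (j : Fin 3) :
    HasTimeDerivOn (Set.Ico 0 T) (fun s => u s j) fun s => momentumRhs (u s) (p s) j := by
  intro t ht x
  rw [interior_Ico] at ht
  have hjoint : DifferentiableAt ℝ (fun tx : ℝ × E3 => u tx.1 j tx.2) (t, x) :=
    ((h.smooth_u j).contDiffAt
      (prod_mem_nhds (Ico_mem_nhds ht.1 ht.2) univ_mem)).differentiableAt (by simp)
  have hslice : DifferentiableAt ℝ (fun s => u s j x) t :=
    DifferentiableAt.comp (f := fun s : ℝ => (s, x)) t hjoint (by fun_prop)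
  refine hslice.hasDerivAt.congr_deriv ?_
  have heqn := h.eqn t ht x j
  simp only [pd_eq_lineDerivOp] at heqn
  simp only [momentumRhs, laplacian_eq_sum_stdVec, advect, sub_apply, sum_apply,
    schwartzMul_apply]
  linarith

lemma hasDerivAt_energy (h : IsStrongSolution T u p) {t : ℝ} (ht : t ∈ Set.Ioo 0 T) :
    HasDerivAt (fun s => vecNorm (u s) ^ 2) (-2 * vecGradNorm (u t) ^ 2) t := by
  refine (HasTimeDerivOn.hasDerivAt_vecNorm_sq h.hasTimeDerivOn_velocity
    h.isSmoothFamily_velocity h.isSmoothFamily_momentumRhs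
    (by rwa [interior_Ico])).congr_deriv ?_
  rw [(h.isDivFree ⟨ht.1.le, ht.2⟩).sum_inner_toL2_momentumRhs]
  ring

lemma hasDerivAt_enstrophy (h : IsStrongSolution T u p) {t : ℝ} (ht : t ∈ Set.Ioo 0 T) :
    HasDerivAt (fun s => vecNorm (vort (u s)) ^ 2)
      (2 * (vortexStretch (u t) - vecGradNorm (vort (u t)) ^ 2)) t := by
  have hI := uniqueDiffOn_Ico 0 T
  refine (HasTimeDerivOn.hasDerivAt_vecNorm_sq
    (.vort h.hasTimeDerivOn_velocity h.isSmoothFamily_velocity)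
    (.vort h.isSmoothFamily_velocity hI) (.vort h.isSmoothFamily_momentumRhs hI)
    (by rwa [interior_Ico])).congr_deriv ?_
  rw [(h.isDivFree ⟨ht.1.le, ht.2⟩).sum_inner_toL2_vort_momentumRhs]

lemma vecNorm_velocity_le (h : IsStrongSolution T u p) {t : ℝ} (ht : t ∈ Set.Ico 0 T) :
    vecNorm (u t) ≤ vecNorm (u 0) := by
  have hd (s) (hs : s ∈ interior (Set.Icc 0 t)) :
      HasDerivAt (fun s => vecNorm (u s) ^ 2) (-2 * vecGradNorm (u s) ^ 2) s := by
    rw [interior_Icc] at hs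
    exact h.hasDerivAt_energy ⟨hs.1, hs.2.trans ht.2⟩
  have hanti : AntitoneOn (fun s => vecNorm (u s) ^ 2) (Set.Icc 0 t) :=
    antitoneOn_of_deriv_nonpos (convex_Icc 0 t)
      ((IsSmoothFamily.continuousOn_vecNorm_sq h.isSmoothFamily_velocity).mono
        (Set.Icc_subset_Ico_right ht.2))
      (fun s hs => (hd s hs).differentiableAt.differentiableWithinAt) fun s hs => by
        rw [(hd s hs).deriv]
        linarith [sq_nonneg (vecGradNorm (u s))]
  exact le_of_sq_le_sq
    (hanti (Set.left_mem_Icc.2 ht.1) (Set.right_mem_Icc.2 ht.1) ht.1) (vecNorm_nonneg _)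

lemma vecNorm_vort_le {χ : E3 → ℝ} {α : ℝ} {K : ℝ≥0} (hχ : IsLPCutoff χ) (hα : 0 < α)
    (hα1 : α < 1) (h : IsStrongSolution T u p)
    (hK : ∫⁻ τ in Set.Ioo 0 T, vecBesovInf χ (-α) (curlS (u τ)) ^ (2 / (2 - α)) ≤ K)
    {t : ℝ} (ht : t ∈ Set.Ico 0 T) :
    vecNorm (vort (u t)) ≤ vecNorm (vort (u 0)) * Real.exp (stretchConst α * K) := by
  have hC := stretchConst_pos hα hα1
  have hφ : ∫⁻ τ in Set.Ioo 0 t, vecBesovInf χ (-α) (curlS (u τ)) ^ (2 / (2 - α)) ≤ K :=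
    (lintegral_mono_set (Set.Ioo_subset_Ioo_right ht.2.le)).trans hK
  have henstrophy : vecNorm (vort (u t)) ^ 2 ≤
      vecNorm (vort (u 0)) ^ 2 * Real.exp (2 * stretchConst α * K) := by
    refine le_mul_exp_mul_of_lintegral_le (E := fun s => vecNorm (vort (u s)) ^ 2) ht.1
      (by positivity) (fun s => sq_nonneg _)
      ((IsSmoothFamily.continuousOn_vecNorm_sq (.vort h.isSmoothFamily_velocity
        (uniqueDiffOn_Ico 0 T))).mono (Set.Icc_subset_Ico_right ht.2))
      (fun s hs => h.hasDerivAt_enstrophy ⟨hs.1, hs.2.trans ht.2⟩) hφ fun s hs hfin => ?_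
    rw [mul_assoc 2, mul_assoc 2]
    gcongr
    exact (h.isDivFree ⟨hs.1.le, hs.2.trans ht.2⟩).vortexStretch_sub_sq_vecGradNorm_le hχ hα hα1
      hfin
  have hvort := vecNorm_nonneg (vort (u 0))
  refine le_of_sq_le_sq (henstrophy.trans_eq ?_) (by positivity)
  rw [mul_pow, ← Real.exp_nat_mul, Nat.cast_ofNat, mul_assoc]

end IsStrongSolution

theorem blowup_criterion_a_priori_bound_general
    (χ : E3 → ℝ) (hχ : IsLPCutoff χ) (α : ℝ) (hα : 0 < α) (hα1 : α < 1) :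
    ∃ C : ℝ, 0 < C ∧
      ∀ (T : ℝ) (u : ℝ → Fin 3 → 𝓢(E3, ℝ)) (p : ℝ → 𝓢(E3, ℝ)), IsStrongSolution T u p →
        ∀ K : ℝ≥0,
          ∫⁻ τ in Set.Ioo 0 T, vecBesovInf χ (-α) (curlS (u τ)) ^ (2 / (2 - α)) ≤ K →
            (∀ t ∈ Set.Ico 0 T,
              vecL2 (curlS (u t)) ≤ vecL2 (curlS (u 0)) * ENNReal.ofReal (Real.exp (C * K))) ∧
            ∀ t ∈ Set.Ico 0 T,
              vecL2 (fun i => ⇑(u t i)) + gradL2 (fun i => ⇑(u t i)) ≤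
                vecL2 (fun i => ⇑(u 0 i)) +
                  vecL2 (curlS (u 0)) * ENNReal.ofReal (Real.exp (C * K)) := by
  refine ⟨stretchConst α, stretchConst_pos hα hα1, fun T u p h K hK => ?_⟩
  have hvort (t) (ht : t ∈ Set.Ico 0 T) : ENNReal.ofReal (vecNorm (vort (u t))) ≤
      ENNReal.ofReal (vecNorm (vort (u 0))) * ENNReal.ofReal (Real.exp (stretchConst α * K)) := by
    rw [← ENNReal.ofReal_mul (vecNorm_nonneg _)]
    exact ENNReal.ofReal_le_ofReal (h.vecNorm_vort_le hχ hα hα1 hK ht)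
  simp only [vecL2_curlS_eq_ofReal_vecNorm_vort, vecL2_eq_ofReal_vecNorm,
    gradL2_eq_ofReal_vecGradNorm]
  refine ⟨hvort, fun t ht => add_le_add ?_ ?_⟩
  · exact ENNReal.ofReal_le_ofReal (h.vecNorm_velocity_le ht)
  · rw [(h.isDivFree ht).vecGradNorm_eq]
    exact hvort t ht

/-- **A priori `H¹` bound underlying the blow-up criterion (Theorem 3.1)**: there is a
constant `C > 0`, independent of the solution, such that whenever `(u, p)` is a strong
solution of the Navier–Stokes equations on `[0,T) × ℝ³` with vorticity `ω = curl u` and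
`K := ∫₀ᵀ (‖ω(τ)‖_{Ḃ^{-α}_{∞,∞}}^{2/(2-α)} + ‖ω(τ)‖_{Ḃ^{-1-α}_{∞,∞}}^{2/(1-α)}) dτ < ∞`,
then `‖ω(t)‖_{L²} ≤ ‖ω(0)‖_{L²} exp(C K)` and
`‖u(t)‖_{L²} + ‖∇u(t)‖_{L²} ≤ ‖u(0)‖_{L²} + ‖ω(0)‖_{L²} exp(C K)` for all `t ∈ [0,T)`. -/
theorem blowup_criterion_a_priori_bound
    (χ : E3 → ℝ) (hχ : IsLPCutoff χ) (α T : ℝ) (hα : 0 < α) (hα1 : α < 1) (hT : 0 < T) :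
    ∃ C : ℝ, 0 < C ∧
      ∀ (u : ℝ → Fin 3 → 𝓢(E3, ℝ)) (p : ℝ → 𝓢(E3, ℝ)), IsStrongSolution T u p →
        vortBesovIntegral χ α T u < ∞ →
          (∀ t ∈ Set.Ico (0 : ℝ) T,
            vecL2 (curlS (u t)) ≤ vecL2 (curlS (u 0)) *
              ENNReal.ofReal (Real.exp (C * (vortBesovIntegral χ α T u).toReal))) ∧
          ∀ t ∈ Set.Ico (0 : ℝ) T,
            vecL2 (fun i => ⇑(u t i)) + gradL2 (fun i => ⇑(u t i)) ≤
              vecL2 (fun i => ⇑(u 0 i)) + vecL2 (curlS (u 0)) *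
                ENNReal.ofReal (Real.exp (C * (vortBesovIntegral χ α T u).toReal)) := by
  obtain ⟨C, hC, hbound⟩ := blowup_criterion_a_priori_bound_general χ hχ α hα hα1
  exact ⟨C, hC, fun u p h hK => hbound T u p h _
    ((lintegral_mono fun _ => le_self_add).trans_eq (ENNReal.coe_toNNReal hK.ne).symm)⟩
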